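/- arXiv:math/0606007 — 5 statements merged into one kernel-verified Lean document; each statement's English description precedes it below -/
import Mathlib

section
/- (Schur's comparison theorem) Let γ̄ : [0,L] → ℝ² be an injective arc parametrized by arclength such that the union of the image of γ̄ with the straight segment from γ̄(L) to γ̄(0) is the frontier of a compact convex subset of ℝ² (i.e. joining the endpoints of γ̄ results in a convex simple closed curve). Let γ : [0,L] → ℝ^d be an arc parametrized by arclength such that γ̄ has nowhere less curvature than γ, meaning TC(γ̄|[a,b]) ≥ TC(γ|[a,b]) for every subinterval [a,b] ⊆ [0,L]. Then the endpoints of γ are at least as far apart as those of γ̄: ‖γ(L) − γ(0)‖ ≥ ‖γ̄(L) − γ̄(0)‖. -/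
open Set Filter MeasureTheory
open scoped ENNReal NNReal RealInnerProductSpace

noncomputable section

/-- The parameters `u 0 < u 1 < ⋯ < u m` of a polygon inscribed in (the restriction to
`[a,b]` of) a curve: strictly increasing parameters lying in `[a,b]`. -/
def InscribedIn (a b : ℝ) (m : ℕ) (u : ℕ → ℝ) : Prop :=
  (∀ i < m, u i < u (i + 1)) ∧ ∀ i ≤ m, u i ∈ Set.Icc a b

/-- The length of the polygon inscribed in the curve `γ` with parameters `u 0, …, u m`:
the sum of the euclidean lengths of its edges. -/
def polyLen {E : Type*} [NormedAddCommGroup E] (γ : ℝ → E) (m : ℕ) (u : ℕ → ℝ) : ℝ :=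
  ∑ i ∈ Finset.range m, ‖γ (u (i + 1)) - γ (u i)‖

/-- The (Jordan) length of the arc `γ : [a,b] → E`: the supremum of the lengths of all
inscribed polygons, valued in `[0,∞]`. -/
def arcLen {E : Type*} [NormedAddCommGroup E] (γ : ℝ → E) (a b : ℝ) : ℝ≥0∞ :=
  ⨆ (m : ℕ) (u : ℕ → ℝ) (_ : InscribedIn a b m u), ENNReal.ofReal (polyLen γ m u)

/-- The list of vertices of the polygon inscribed in `γ` with parameters `u 0, …, u m`. -/
def vertexList {E : Type*} (γ : ℝ → E) (m : ℕ) (u : ℕ → ℝ) : List E :=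
  (List.range (m + 1)).map fun i => γ (u i)

/-- Collapse consecutive equal entries of a list to single entries. -/
def collapse {E : Type*} (l : List E) : List E :=
  @List.destutter E (· ≠ ·) (Classical.decRel _) l

/-- The sum of the turning angles of a polygon given by its list of vertices: at each
interior vertex, the angle in `[0,π]` between the incoming and outgoing edge vectors. -/
def turnSum {E : Type*} [NormedAddCommGroup E] [InnerProductSpace ℝ E] : List E → ℝ
  | a :: b :: c :: l => InnerProductGeometry.angle (b - a) (c - b) + turnSum (b :: c :: l)
  | _ => 0

/-- The sum, at each interior vertex, of the euclidean distance `‖u₊ - u₋‖` between the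
unit tangent vectors of the incoming and outgoing edges (so a corner of turning angle θ
contributes `2 sin(θ/2)`). -/
def starSum {E : Type*} [NormedAddCommGroup E] [InnerProductSpace ℝ E] : List E → ℝ
  | a :: b :: c :: l =>
      ‖(‖c - b‖⁻¹ • (c - b)) - (‖b - a‖⁻¹ • (b - a))‖ + starSum (b :: c :: l)
  | _ => 0

/-- The total curvature of the polygon inscribed in `γ` with parameters `u 0, …, u m`:
after collapsing consecutive equal vertices, the sum of its turning angles. -/
def polyTC {E : Type*} [NormedAddCommGroup E] [InnerProductSpace ℝ E]
    (γ : ℝ → E) (m : ℕ) (u : ℕ → ℝ) : ℝ :=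
  turnSum (collapse (vertexList γ m u))

/-- The total curvature of the arc `γ : [a,b] → E`: the supremum over all inscribed
polygons of their total curvature, valued in `[0,∞]`. -/
def arcTC {E : Type*} [NormedAddCommGroup E] [InnerProductSpace ℝ E]
    (γ : ℝ → E) (a b : ℝ) : ℝ≥0∞ :=
  ⨆ (m : ℕ) (u : ℕ → ℝ) (_ : InscribedIn a b m u), ENNReal.ofReal (polyTC γ m u)

/-- The euclidean total curvature `TC*` of the polygon inscribed in `γ` with parameters
`u 0, …, u m`. -/
def polyTCStar {E : Type*} [NormedAddCommGroup E] [InnerProductSpace ℝ E]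
    (γ : ℝ → E) (m : ℕ) (u : ℕ → ℝ) : ℝ :=
  starSum (collapse (vertexList γ m u))

/-- The euclidean total curvature `TC*` of the arc `γ : [a,b] → E`. -/
def arcTCStar {E : Type*} [NormedAddCommGroup E] [InnerProductSpace ℝ E]
    (γ : ℝ → E) (a b : ℝ) : ℝ≥0∞ :=
  ⨆ (m : ℕ) (u : ℕ → ℝ) (_ : InscribedIn a b m u), ENNReal.ofReal (polyTCStar γ m u)

/-- Cyclically ordered parameters `u 0 < ⋯ < u m` in `[0,1)` of a polygon inscribed in a
loop `γ : ℝ/ℤ → E`. -/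
def LoopInscribed (m : ℕ) (u : ℕ → ℝ) : Prop :=
  (∀ i < m, u i < u (i + 1)) ∧ ∀ i ≤ m, u i ∈ Set.Ico (0 : ℝ) 1

/-- The list of vertices of the polygon inscribed in the loop `γ` with parameters
`u 0, …, u m`. -/
def loopVertexList {E : Type*} (γ : AddCircle (1 : ℝ) → E) (m : ℕ) (u : ℕ → ℝ) : List E :=
  (List.range (m + 1)).map fun i => γ (u i : ℝ)

/-- The sum of the lengths of the successive edges of a list of points. -/
def lenList {E : Type*} [NormedAddCommGroup E] : List E → ℝ
  | a :: b :: l => ‖b - a‖ + lenList (b :: l)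
  | _ => 0

/-- The length of the closed polygon inscribed in the loop `γ` with parameters
`u 0, …, u m`: the sum of the edge lengths, indices taken cyclically. -/
def loopPolyLen {E : Type*} [NormedAddCommGroup E]
    (γ : AddCircle (1 : ℝ) → E) (m : ℕ) (u : ℕ → ℝ) : ℝ :=
  lenList (loopVertexList γ m u ++ (loopVertexList γ m u).take 1)

/-- The length of a loop `γ : ℝ/ℤ → E`: the supremum of the lengths of inscribed closed
polygons, valued in `[0,∞]`. -/
def loopLen {E : Type*} [NormedAddCommGroup E] (γ : AddCircle (1 : ℝ) → E) : ℝ≥0∞ :=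
  ⨆ (m : ℕ) (u : ℕ → ℝ) (_ : LoopInscribed m u), ENNReal.ofReal (loopPolyLen γ m u)

open Classical in
/-- Collapse consecutive equal vertices of a *cyclic* list of vertices: collapse
consecutive duplicates, also across the wrap-around. -/
def cyclicCollapse {E : Type*} (l : List E) : List E :=
  if 2 ≤ (collapse l).length ∧ (collapse l).getLast? = (collapse l).head? then
    (collapse l).dropLast
  else collapse l

/-- The total curvature of the closed polygon inscribed in the loop `γ` with parameters
`u 0, …, u m`: after cyclically collapsing consecutive equal vertices, the sum of the
turning angles at all of its vertices (every vertex of a closed polygon is interior). -/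
def loopPolyTC {E : Type*} [NormedAddCommGroup E] [InnerProductSpace ℝ E]
    (γ : AddCircle (1 : ℝ) → E) (m : ℕ) (u : ℕ → ℝ) : ℝ :=
  turnSum (cyclicCollapse (loopVertexList γ m u) ++
    (cyclicCollapse (loopVertexList γ m u)).take 2)

/-- The total curvature of a loop `γ : ℝ/ℤ → E`: the supremum over all inscribed closed
polygons of their total curvature, valued in `[0,∞]`. -/
def loopTC {E : Type*} [NormedAddCommGroup E] [InnerProductSpace ℝ E]
    (γ : AddCircle (1 : ℝ) → E) : ℝ≥0∞ :=
  ⨆ (m : ℕ) (u : ℕ → ℝ) (_ : LoopInscribed m u), ENNReal.ofReal (loopPolyTC γ m u)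

/-- The euclidean total curvature `TC*` of the closed inscribed polygon. -/
def loopPolyTCStar {E : Type*} [NormedAddCommGroup E] [InnerProductSpace ℝ E]
    (γ : AddCircle (1 : ℝ) → E) (m : ℕ) (u : ℕ → ℝ) : ℝ :=
  starSum (cyclicCollapse (loopVertexList γ m u) ++
    (cyclicCollapse (loopVertexList γ m u)).take 2)

/-- The euclidean total curvature `TC*` of a loop `γ : ℝ/ℤ → E`. -/
def loopTCStar {E : Type*} [NormedAddCommGroup E] [InnerProductSpace ℝ E]
    (γ : AddCircle (1 : ℝ) → E) : ℝ≥0∞ :=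
  ⨆ (m : ℕ) (u : ℕ → ℝ) (_ : LoopInscribed m u), ENNReal.ofReal (loopPolyTCStar γ m u)

end

section PartAnalysis

variable {E : Type*} [NormedAddCommGroup E] [InnerProductSpace ℝ E]

lemma sc_inscribed_pair {a b : ℝ} (h : a < b) :
    InscribedIn a b 1 (fun i => if i = 0 then a else b) := by
  refine ⟨fun i hi => ?_, fun i hi => ?_⟩
  · obtain rfl : i = 0 := by omega
    simpa using h
  · by_cases h0 : i = 0
    · simp [h0, h.le]
    · simp [h0, h.le]

lemma sc_dist_le {L : ℝ} {γ : ℝ → E}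
    (harc : ∀ a b : ℝ, 0 ≤ a → a ≤ b → b ≤ L → arcLen γ a b = ENNReal.ofReal (b - a))
    {a b : ℝ} (ha : 0 ≤ a) (hab : a ≤ b) (hb : b ≤ L) : ‖γ b - γ a‖ ≤ b - a := by
  rcases hab.eq_or_lt with rfl | hlt
  · simp
  have h1 : ENNReal.ofReal (polyLen γ 1 (fun i => if i = 0 then a else b)) ≤ arcLen γ a b :=
    le_iSup_of_le 1 (le_iSup_of_le _ (le_iSup_of_le (sc_inscribed_pair hlt) le_rfl))
  rw [harc a b ha hab hb, ENNReal.ofReal_le_ofReal_iff (by linarith)] at h1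
  simpa [polyLen] using h1

lemma sc_lip {L : ℝ} {γ : ℝ → E}
    (harc : ∀ a b : ℝ, 0 ≤ a → a ≤ b → b ≤ L → arcLen γ a b = ENNReal.ofReal (b - a)) :
    LipschitzOnWith 1 γ (Set.Icc 0 L) := by
  apply LipschitzOnWith.of_dist_le_mul
  intro x hx y hy
  rw [dist_eq_norm, NNReal.coe_one, one_mul, Real.dist_eq]
  rcases le_total x y with h | h
  · rw [norm_sub_rev, abs_sub_comm]
    exact (sc_dist_le harc hx.1 h hy.2).trans (le_abs_self _)
  · exact (sc_dist_le harc hy.1 h hx.2).trans (le_abs_self _)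

lemma sc_ae_diff [FiniteDimensional ℝ E] {L : ℝ} {γ : ℝ → E}
    (hl : LipschitzOnWith 1 γ (Set.Icc 0 L)) :
    ∀ᵐ t : ℝ, t ∈ Set.Ioo 0 L → DifferentiableAt ℝ γ t := by
  filter_upwards [hl.ae_differentiableWithinAt_of_mem (μ := volume)] with t ht hI
  exact (ht (Ioo_subset_Icc_self hI)).differentiableAt (Icc_mem_nhds hI.1 hI.2)

lemma sc_norm_deriv_le {L : ℝ} {γ : ℝ → E} (hl : LipschitzOnWith 1 γ (Set.Icc 0 L))
    {t : ℝ} (ht : t ∈ Set.Ioo 0 L) : ‖deriv γ t‖ ≤ 1 := by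
  simpa using norm_deriv_le_of_lipschitzOn (Icc_mem_nhds ht.1 ht.2) hl

lemma sc_ae_of_Ioo {a b : ℝ} {p : ℝ → Prop} (h : ∀ᵐ t : ℝ, t ∈ Set.Ioo a b → p t) :
    ∀ᵐ t : ℝ ∂(volume.restrict (Set.Ioc a b)), p t := by
  rw [ae_restrict_iff'₀ measurableSet_Ioc.nullMeasurableSet]
  have h2 : ∀ᵐ t : ℝ, t ≠ b := by
    simp [ae_iff]
  filter_upwards [h, h2] with t h1 h2 h3
  exact h1 ⟨h3.1, lt_of_le_of_ne h3.2 h2⟩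

lemma sc_mono_of_ae {a b : ℝ} (hab : a ≤ b) {f : ℝ → ℝ} {K : ℝ≥0}
    (hf : LipschitzOnWith K f (Set.Icc a b))
    (h : ∀ᵐ t : ℝ, t ∈ Set.Ioo a b → 0 ≤ deriv f t) : f a ≤ f b := by
  have h1 := (LipschitzOnWith.absolutelyContinuousOnInterval
    (by rwa [Set.uIcc_of_le hab] : LipschitzOnWith K f (Set.uIcc a b))).integral_deriv_eq_sub
  have h2 : 0 ≤ ∫ x in a..b, deriv f x := by
    rw [intervalIntegral.integral_of_le hab]
    exact integral_nonneg_of_ae (sc_ae_of_Ioo h)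
  linarith

lemma sc_inner_lip {L : ℝ} {γ : ℝ → E} (hl : LipschitzOnWith 1 γ (Set.Icc 0 L)) (w : E) :
    LipschitzOnWith ‖w‖₊ (fun t => ⟪w, γ t⟫) (Set.Icc 0 L) := by
  apply LipschitzOnWith.of_dist_le_mul
  intro x hx y hy
  have h := hl.dist_le_mul x hx y hy
  rw [NNReal.coe_one, one_mul] at h
  rw [Real.dist_eq, ← inner_sub_right, coe_nnnorm]
  refine (abs_real_inner_le_norm _ _).trans ?_
  rw [← dist_eq_norm]
  gcongr

lemma sc_deriv_inner {γ : ℝ → E} (w : E) {t : ℝ} (h : DifferentiableAt ℝ γ t) :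
    HasDerivAt (fun t => ⟪w, γ t⟫) ⟪w, deriv γ t⟫ t := by
  have := (hasDerivAt_const t w).inner ℝ h.hasDerivAt
  simpa using this

lemma sc_speed_int [FiniteDimensional ℝ E] {L : ℝ} {γ : ℝ → E}
    (hl : LipschitzOnWith 1 γ (Set.Icc 0 L)) {a b : ℝ} (ha : 0 ≤ a) (hab : a ≤ b) (hb : b ≤ L) :
    IntervalIntegrable (fun t => ‖deriv γ t‖) volume a b := by
  rw [intervalIntegrable_iff_integrableOn_Ioc_of_le hab]
  refine Measure.integrableOn_of_bounded (M := 1) (by simp) ?_ ?_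
  · exact (stronglyMeasurable_deriv γ).norm.aestronglyMeasurable
  · apply sc_ae_of_Ioo
    refine Filter.Eventually.of_forall fun t ht => ?_
    rw [norm_norm]
    exact sc_norm_deriv_le hl ⟨ha.trans_lt ht.1, ht.2.trans_le hb⟩

lemma sc_edge_le [FiniteDimensional ℝ E] {L : ℝ} {γ : ℝ → E}
    (hl : LipschitzOnWith 1 γ (Set.Icc 0 L)) {a b : ℝ} (ha : 0 ≤ a) (hab : a ≤ b) (hb : b ≤ L) :
    ‖γ b - γ a‖ ≤ ∫ t in a..b, ‖deriv γ t‖ := by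
  by_cases h0 : γ b - γ a = 0
  · rw [h0, norm_zero, intervalIntegral.integral_of_le hab]
    exact integral_nonneg fun t => norm_nonneg _
  set w : E := ‖γ b - γ a‖⁻¹ • (γ b - γ a) with hw
  have hn : ‖γ b - γ a‖ ≠ 0 := norm_ne_zero_iff.mpr h0
  have hw1 : ‖w‖ = 1 := by
    rw [hw, norm_smul, norm_inv, norm_norm, inv_mul_cancel₀ hn]
  have hsub : Set.uIcc a b ⊆ Set.Icc 0 L := by
    rw [Set.uIcc_of_le hab]; exact Set.Icc_subset_Icc ha hb
  have h1 := ((sc_inner_lip hl w).mono hsub).absolutelyContinuousOnInterval.integral_deriv_eq_sub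
  have h2 : ⟪w, γ b⟫ - ⟪w, γ a⟫ = ‖γ b - γ a‖ := by
    rw [← inner_sub_right, hw, real_inner_smul_left, real_inner_self_eq_norm_sq]
    field_simp
  rw [← h2, ← h1]
  have hI : IntervalIntegrable (deriv fun t => ⟪w, γ t⟫) volume a b := 
    ((sc_inner_lip hl w).mono hsub).absolutelyContinuousOnInterval.intervalIntegrable_deriv
  apply intervalIntegral.integral_mono_ae_restrict hab hI (sc_speed_int hl ha hab hb)
  have : ∀ᵐ t : ℝ, t ∈ Set.Ioo a b → deriv (fun t => ⟪w, γ t⟫) t ≤ ‖deriv γ t‖ := by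
    filter_upwards [sc_ae_diff hl] with t ht hI
    have hd := ht ⟨ha.trans_lt hI.1, hI.2.trans_le hb⟩
    rw [(sc_deriv_inner w hd).deriv]
    refine (real_inner_le_norm _ _).trans ?_
    rw [hw1, one_mul]
  have h3 := sc_ae_of_Ioo this
  rw [Filter.EventuallyLE]
  rwa [← restrict_Ioc_eq_restrict_Icc]

lemma sc_poly_le [FiniteDimensional ℝ E] {L : ℝ} {γ : ℝ → E}
    (hl : LipschitzOnWith 1 γ (Set.Icc 0 L)) (m : ℕ) (u : ℕ → ℝ) (hu : InscribedIn 0 L m u) :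
    polyLen γ m u ≤ ∫ t in (u 0)..(u m), ‖deriv γ t‖ := by
  have h0 : polyLen γ m u ≤ ∑ i ∈ Finset.range m, ∫ t in (u i)..(u (i+1)), ‖deriv γ t‖ := by
    apply Finset.sum_le_sum
    intro i hi
    have hi := Finset.mem_range.mp hi
    exact sc_edge_le hl (hu.2 i (by omega)).1 (hu.1 i hi).le (hu.2 (i+1) (by omega)).2
  refine h0.trans (le_of_eq ?_)
  apply intervalIntegral.sum_integral_adjacent_intervals
  intro i hi
  exact sc_speed_int hl (hu.2 i (by omega)).1 (hu.1 i hi).le (hu.2 (i+1) (by omega)).2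

lemma sc_ae_unit [FiniteDimensional ℝ E] {L : ℝ} (hL : 0 ≤ L) {γ : ℝ → E}
    (harc : ∀ a b : ℝ, 0 ≤ a → a ≤ b → b ≤ L → arcLen γ a b = ENNReal.ofReal (b - a)) :
    ∀ᵐ t : ℝ, t ∈ Set.Ioo 0 L → DifferentiableAt ℝ γ t ∧ ‖deriv γ t‖ = 1 := by
  have hl := sc_lip harc
  have hnn : 0 ≤ ∫ t in (0:ℝ)..L, ‖deriv γ t‖ := by
    rw [intervalIntegral.integral_of_le hL]
    exact integral_nonneg fun t => norm_nonneg _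
  have h1 : arcLen γ 0 L ≤ ENNReal.ofReal (∫ t in (0:ℝ)..L, ‖deriv γ t‖) := by
    refine iSup_le fun m => iSup_le fun u => iSup_le fun hu => ENNReal.ofReal_le_ofReal ?_
    refine (sc_poly_le hl m u hu).trans ?_
    have hle : u 0 ≤ u m := by
      have : ∀ k ≤ m, u 0 ≤ u k := by
        intro k
        induction k with
        | zero => intro _; exact le_rfl
        | succ k ih => intro hk; exact (ih (by omega)).trans (hu.1 k (by omega)).le
      exact this m le_rfl
    apply intervalIntegral.integral_mono_interval (hu.2 0 (by omega)).1 hle (hu.2 m le_rfl).2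
    · exact Filter.Eventually.of_forall fun t => norm_nonneg _
    · exact sc_speed_int hl le_rfl hL le_rfl
  rw [harc 0 L le_rfl hL le_rfl, ENNReal.ofReal_le_ofReal_iff hnn, sub_zero] at h1
  have hspd := sc_speed_int hl le_rfl hL le_rfl
  have hint2 : IntervalIntegrable (fun t => 1 - ‖deriv γ t‖) volume 0 L :=
    intervalIntegrable_const.sub hspd
  have hae : ∀ᵐ t : ℝ ∂(volume.restrict (Set.Ioc 0 L)), 0 ≤ 1 - ‖deriv γ t‖ :=
    sc_ae_of_Ioo (Filter.Eventually.of_forall fun t ht => by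
      have := sc_norm_deriv_le hl ht
      linarith)
  have h2 : ∫ t in (0:ℝ)..L, (1 - ‖deriv γ t‖) ≤ 0 := by
    rw [intervalIntegral.integral_sub intervalIntegrable_const hspd]
    simp only [intervalIntegral.integral_const, smul_eq_mul]
    linarith
  rw [intervalIntegral.integral_of_le hL] at h2
  have h3 := (integral_eq_zero_iff_of_nonneg_ae hae
    ((intervalIntegrable_iff_integrableOn_Ioc_of_le hL).mp hint2)).mp
      (le_antisymm h2 (integral_nonneg_of_ae hae))
  rw [Filter.EventuallyEq, ae_restrict_iff'₀ measurableSet_Ioc.nullMeasurableSet] at h3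
  filter_upwards [h3, sc_ae_diff hl] with t ht hd hI
  refine ⟨hd hI, ?_⟩
  have := ht (Ioo_subset_Ioc_self hI)
  simp only [Pi.zero_apply] at this
  linarith

end PartAnalysis

section PartOrientation

/-- The determinant of two plane vectors. -/
def scDet (v w : EuclideanSpace ℝ (Fin 2)) : ℝ := v 0 * w 1 - v 1 * w 0

lemma sc_tri_int {C : Set (EuclideanSpace ℝ (Fin 2))} (hC : Convex ℝ C)
    {o P Q R : EuclideanSpace ℝ (Fin 2)} (ho : o ∈ interior C) (hP : P ∈ C) (hQ : Q ∈ C)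
    {l m : ℝ} (hl : 0 ≤ l) (hm : 0 ≤ m) (hlm : l + m < 1)
    (hR : R = o + l • (P - o) + m • (Q - o)) : R ∈ interior C := by
  rcases (add_nonneg hl hm).eq_or_lt with h0 | hpos
  · have h1 : l = 0 := by linarith
    have h2 : m = 0 := by linarith
    simpa [hR, h1, h2] using ho
  · have hne : l + m ≠ 0 := hpos.ne'
    have hy : (l / (l + m)) • P + (m / (l + m)) • Q ∈ C :=
      hC hP hQ (by positivity) (by positivity) (by field_simp)
    have := hC.combo_interior_closure_mem_interior ho (subset_closure hy)
      (a := 1 - (l + m)) (b := l + m) (by linarith) hpos.le (by ring)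
    convert this using 1
    rw [hR, smul_add, smul_smul, smul_smul, mul_div_cancel₀ _ hne, mul_div_cancel₀ _ hne]
    module

lemma sc_det_int {C : Set (EuclideanSpace ℝ (Fin 2))} (hC : Convex ℝ C)
    {o P Q R : EuclideanSpace ℝ (Fin 2)} (ho : o ∈ interior C) (hP : P ∈ C) (hQ : Q ∈ C)
    (h1 : scDet (P - o) (Q - o) < 0) (h2 : 0 ≤ scDet (Q - o) (R - o))
    (h3 : 0 ≤ scDet (R - o) (P - o))
    (h4 : scDet (P - o) (Q - o) + scDet (Q - o) (R - o) + scDet (R - o) (P - o) < 0) :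
    R ∈ interior C := by
  have hpos : 0 < -scDet (P - o) (Q - o) := by linarith
  refine sc_tri_int hC ho hP hQ (l := scDet (Q - o) (R - o) / (-scDet (P - o) (Q - o)))
    (m := scDet (R - o) (P - o) / (-scDet (P - o) (Q - o))) (by positivity) (by positivity) ?_ ?_
  · rw [← add_div, div_lt_one hpos]; linarith
  · ext i
    simp only [PiLp.add_apply, PiLp.smul_apply, PiLp.sub_apply, smul_eq_mul]
    have hne := hpos.ne'
    rw [← sub_eq_iff_eq_add', ← sub_eq_zero] 
    have key : ∀ A B D x y z : ℝ, A ≠ 0 → x * A - (B * y + D * z) = 0 →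
        x - (B / A * y + D / A * z) = 0 := by
      intro A B D x y z hA h
      field_simp
      linarith
    have := key (-scDet (P - o) (Q - o)) (scDet (Q - o) (R - o)) (scDet (R - o) (P - o))
      (R i - o i) (P i - o i) (Q i - o i) hne (by
        fin_cases i <;> simp [scDet] <;> ring)
    linarith

lemma sc_det_nonneg {C : Set (EuclideanSpace ℝ (Fin 2))} (hC : Convex ℝ C)
    {o P Q R : EuclideanSpace ℝ (Fin 2)} (ho : o ∈ interior C) (hP : P ∈ C) (hQ : Q ∈ C)
    (hR : R ∈ C) (hP' : P ∉ interior C) (hQ' : Q ∉ interior C) (hR' : R ∉ interior C)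
    {α β k1 k2 k3 : ℝ} (hα : 0 < α) (hβ : 0 < β) (hαβ : α + β < 2 * Real.pi)
    (hk1 : 0 < k1) (hk2 : 0 < k2) (hk3 : 0 < k3)
    (h1 : scDet (P - o) (Q - o) = k1 * Real.sin α)
    (h2 : scDet (Q - o) (R - o) = k2 * Real.sin β)
    (h3 : scDet (P - o) (R - o) = k3 * Real.sin (α + β)) :
    0 ≤ scDet (Q - P) (R - P) := by
  by_contra hneg
  push Not at hneg
  have hπ := Real.pi_pos
  have h3' : scDet (R - o) (P - o) = - (k3 * Real.sin (α + β)) := by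
    rw [← h3]; simp [scDet]; ring
  have hsum : scDet (P - o) (Q - o) + scDet (Q - o) (R - o) + scDet (R - o) (P - o) < 0 := by
    have e : scDet (P - o) (Q - o) + scDet (Q - o) (R - o) + scDet (R - o) (P - o) =
        scDet (Q - P) (R - P) := by
      simp [scDet]; ring
    rw [e]; exact hneg
  -- sine negative means angle beyond pi
  have hs : ∀ x, 0 < x → x < 2 * Real.pi → Real.sin x < 0 → Real.pi < x := by
    intro x hx hx2 h
    by_contra hle
    exact absurd (Real.sin_nonneg_of_nonneg_of_le_pi hx.le (not_lt.mp hle)) (not_le.mpr h)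
  have hs2 : ∀ x, Real.pi ≤ x → x < 2 * Real.pi → Real.sin x ≤ 0 := by
    intro x hx hx2
    have := Real.sin_nonneg_of_nonneg_of_le_pi (x := x - Real.pi) (by linarith) (by linarith)
    rw [Real.sin_sub_pi] at this
    linarith
  by_cases c1 : Real.sin α < 0
  · have := hs α hα (by linarith) c1
    apply hR'
    refine sc_det_int hC ho hP hQ (by rw [h1]; exact mul_neg_of_pos_of_neg hk1 c1) ?_ ?_ hsum
    · rw [h2]; exact mul_nonneg hk2.le (Real.sin_nonneg_of_nonneg_of_le_pi hβ.le (by linarith))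
    · rw [h3']
      have := mul_nonneg hk3.le (neg_nonneg.mpr (hs2 (α + β) (by linarith) hαβ))
      linarith
  by_cases c2 : Real.sin β < 0
  · have := hs β hβ (by linarith) c2
    apply hP'
    refine sc_det_int hC ho hQ hR (by rw [h2]; exact mul_neg_of_pos_of_neg hk2 c2) ?_ ?_
      (by linarith)
    · rw [h3']
      have := mul_nonneg hk3.le (neg_nonneg.mpr (hs2 (α + β) (by linarith) hαβ))
      linarith
    · rw [h1]; exact mul_nonneg hk1.le (Real.sin_nonneg_of_nonneg_of_le_pi hα.le (by linarith))
  push Not at c1 c2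
  have e1 := mul_nonneg hk1.le c1
  have e2 := mul_nonneg hk2.le c2
  rw [← h1] at e1
  rw [← h2] at e2
  apply hQ'
  exact sc_det_int hC ho hR hP (by linarith) e1 e2 (by linarith)

/-- The complex number attached to a plane vector. -/
def scZ (v : EuclideanSpace ℝ (Fin 2)) : ℂ := ⟨v 0, v 1⟩

/-- The relative rotation of two vectors. -/
def scW (v w : EuclideanSpace ℝ (Fin 2)) : ℂ := scZ w * (starRingEnd ℂ) (scZ v)

/-- The counterclockwise angle in `(0, 2 π]` from `v` to `w`. -/
noncomputable def scTh (v w : EuclideanSpace ℝ (Fin 2)) : ℝ := Complex.arg (-(scW v w)) + Real.pi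

lemma scW_re (v w : EuclideanSpace ℝ (Fin 2)) : (scW v w).re = v 0 * w 0 + v 1 * w 1 := by
  simp [scW, scZ]; ring

lemma scW_im (v w : EuclideanSpace ℝ (Fin 2)) : (scW v w).im = scDet v w := by
  simp [scW, scZ, scDet]; ring

lemma sc_sin_th (v w : EuclideanSpace ℝ (Fin 2)) :
    ‖scW v w‖ * Real.sin (scTh v w) = scDet v w := by
  rw [scTh, Real.sin_add_pi, ← norm_neg, mul_neg, Complex.norm_mul_sin_arg, Complex.neg_im, scW_im,
    neg_neg]

lemma sc_cos_th (v w : EuclideanSpace ℝ (Fin 2)) :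
    ‖scW v w‖ * Real.cos (scTh v w) = v 0 * w 0 + v 1 * w 1 := by
  rw [scTh, Real.cos_add_pi, ← norm_neg, mul_neg, Complex.norm_mul_cos_arg, Complex.neg_re, scW_re,
    neg_neg]

lemma sc_normW (v w : EuclideanSpace ℝ (Fin 2)) : ‖scW v w‖ = ‖scZ v‖ * ‖scZ w‖ := by
  simp [scW, mul_comm]

lemma sc_normZ (v : EuclideanSpace ℝ (Fin 2)) : ‖scZ v‖ * ‖scZ v‖ = v 0 * v 0 + v 1 * v 1 := by
  rw [Complex.norm_mul_self_eq_normSq]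
  simp [scZ, Complex.normSq]

lemma sc_normZ_pos {v : EuclideanSpace ℝ (Fin 2)} (h : v ≠ 0) : 0 < ‖scZ v‖ := by
  rw [norm_pos_iff]
  intro h0
  apply h
  have h1 := congrArg Complex.re h0
  have h2 := congrArg Complex.im h0
  ext i
  fin_cases i
  · simpa [scZ] using h1
  · simpa [scZ] using h2

lemma sc_th_add {u v w : EuclideanSpace ℝ (Fin 2)} (hu : u ≠ 0) (hv : v ≠ 0) (hw : w ≠ 0) :
    Real.cos (scTh u v + scTh v w - scTh u w) = 1 := by
  have hu' := sc_normZ_pos hu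
  have hv' := sc_normZ_pos hv
  have hw' := sc_normZ_pos hw
  have e : (‖scW u v‖ * ‖scW v w‖ * ‖scW u w‖) *
      Real.cos (scTh u v + scTh v w - scTh u w) = ‖scW u v‖ * ‖scW v w‖ * ‖scW u w‖ := by
    have : (‖scW u v‖ * ‖scW v w‖ * ‖scW u w‖) *
      Real.cos (scTh u v + scTh v w - scTh u w) =
        ((‖scW u v‖ * Real.cos (scTh u v)) * (‖scW v w‖ * Real.cos (scTh v w))
          - (‖scW u v‖ * Real.sin (scTh u v)) * (‖scW v w‖ * Real.sin (scTh v w)))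
          * (‖scW u w‖ * Real.cos (scTh u w)) +
        ((‖scW u v‖ * Real.sin (scTh u v)) * (‖scW v w‖ * Real.cos (scTh v w))
          + (‖scW u v‖ * Real.cos (scTh u v)) * (‖scW v w‖ * Real.sin (scTh v w)))
          * (‖scW u w‖ * Real.sin (scTh u w)) := by
      rw [Real.cos_sub, Real.cos_add, Real.sin_add]; ring
    rw [this]
    simp only [sc_sin_th, sc_cos_th]
    have : ‖scW u v‖ * ‖scW v w‖ * ‖scW u w‖ =
        (‖scZ u‖ * ‖scZ u‖) * (‖scZ v‖ * ‖scZ v‖) * (‖scZ w‖ * ‖scZ w‖) := by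
      simp only [sc_normW]; ring
    rw [this]
    simp only [sc_normZ, scDet]
    ring
  have hpos : 0 < ‖scW u v‖ * ‖scW v w‖ * ‖scW u w‖ := by
    simp only [sc_normW]; positivity
  exact mul_left_cancel₀ hpos.ne' (by rw [e, mul_one])

lemma sc_slit {C : Set (EuclideanSpace ℝ (Fin 2))} (hC : Convex ℝ C)
    {o P Q : EuclideanSpace ℝ (Fin 2)} (ho : o ∈ interior C) (hP : P ∈ C) (hQ : Q ∈ C)
    (hP' : P ∉ interior C) (hQ' : Q ∉ interior C) (hne : P ≠ Q) :
    -(scW (P - o) (Q - o)) ∈ Complex.slitPlane := by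
  rw [Complex.mem_slitPlane_iff]
  by_contra hcon
  push Not at hcon
  obtain ⟨hre, him⟩ := hcon
  rw [Complex.neg_re, scW_re] at hre
  rw [Complex.neg_im, scW_im, neg_eq_zero] at him
  have hPo : P - o ≠ 0 := by
    intro h; rw [sub_eq_zero] at h; exact hP' (h ▸ ho)
  set n2 : ℝ := (P - o) 0 * (P - o) 0 + (P - o) 1 * (P - o) 1 with hn2
  have hn : 0 < n2 := by
    rw [hn2, ← sc_normZ]; exact mul_pos (sc_normZ_pos hPo) (sc_normZ_pos hPo)
  set k : ℝ := ((P - o) 0 * (Q - o) 0 + (P - o) 1 * (Q - o) 1) / n2 with hk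
  have hk0 : 0 ≤ k := div_nonneg (by linarith) hn.le
  have hQk : Q - o = k • (P - o) := by
    ext i
    rw [PiLp.smul_apply, smul_eq_mul, hk, div_mul_eq_mul_div, eq_div_iff hn.ne', hn2]
    unfold scDet at him
    fin_cases i
    · simp only [Fin.zero_eta]
      linear_combination (-(P - o) 1) * him
    · simp only [Fin.mk_one]
      linear_combination ((P - o) 0) * him
  rcases lt_trichotomy k 1 with h | h | h
  · exact hQ' (sc_tri_int hC ho hP hP hk0 le_rfl (by linarith) (m := 0) (by
      rw [← hQk]; simp))
  · rw [h, one_smul] at hQk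
    exact hne (sub_left_injective hQk).symm
  · refine hP' (sc_tri_int hC ho hQ hQ (l := k⁻¹) (by positivity) le_rfl (m := 0) ?_ ?_)
    · rw [add_zero]; exact inv_lt_one_of_one_lt₀ h
    · rw [hQk, smul_smul, inv_mul_cancel₀ (by linarith)]; simp

lemma sc_th_mem {v w : EuclideanSpace ℝ (Fin 2)} (h : -(scW v w) ∈ Complex.slitPlane) :
    0 < scTh v w ∧ scTh v w < 2 * Real.pi := by
  have h1 := Complex.neg_pi_lt_arg (-(scW v w))
  have h2 := Complex.arg_le_pi (-(scW v w))
  have h3 := (Complex.mem_slitPlane_iff_arg.mp h).1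
  have h4 := lt_of_le_of_ne h2 h3
  unfold scTh
  constructor <;> linarith

lemma sc_orient_int {C : Set (EuclideanSpace ℝ (Fin 2))} (hC : Convex ℝ C)
    {o : EuclideanSpace ℝ (Fin 2)} (ho : o ∈ interior C) {L : ℝ}
    {p : ℝ → EuclideanSpace ℝ (Fin 2)} (hpc : ContinuousOn p (Set.Icc 0 L))
    (hinj : Set.InjOn p (Set.Icc 0 L)) (hpC : ∀ t ∈ Set.Icc 0 L, p t ∈ C)
    (hpI : ∀ t ∈ Set.Icc 0 L, p t ∉ interior C) :
    ∃ σ : ℝ, (σ = 1 ∨ σ = -1) ∧ ∀ a b c, 0 ≤ a → a < b → b < c → c ≤ L →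
      0 ≤ σ * scDet (p b - p a) (p c - p a) := by
  have hslit : ∀ s t, 0 ≤ s → s < t → t ≤ L →
      -(scW (p s - o) (p t - o)) ∈ Complex.slitPlane := by
    intro s t hs hst ht
    have ms : s ∈ Set.Icc 0 L := ⟨hs, by linarith⟩
    have mt : t ∈ Set.Icc 0 L := ⟨by linarith, ht⟩
    exact sc_slit hC ho (hpC s ms) (hpC t mt) (hpI s ms) (hpI t mt)
      (fun h => hst.ne (hinj ms mt h))
  have hne : ∀ t ∈ Set.Icc 0 L, p t - o ≠ 0 := by
    intro t ht h
    rw [sub_eq_zero] at h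
    exact hpI t ht (h ▸ ho)
  set S : Set (ℝ × ℝ × ℝ) := {q | 0 ≤ q.1 ∧ q.1 < q.2.1 ∧ q.2.1 < q.2.2 ∧ q.2.2 ≤ L} with hS
  have hSc : Convex ℝ S := by
    rintro ⟨x1, x2, x3⟩ ⟨h1, h2, h3, h4⟩ ⟨y1, y2, y3⟩ ⟨g1, g2, g3, g4⟩ a b ha hb hab
    simp only at h1 h2 h3 h4 g1 g2 g3 g4
    simp only [hS, Set.mem_ofPred_eq, Prod.smul_mk, Prod.mk_add_mk, smul_eq_mul]
    have hs : ∀ u v z w : ℝ, u < v → z < w → a * u + b * z < a * v + b * w := by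
      intro u v z w h h'
      rcases ha.eq_or_lt with rfl | ha'
      · have : b = 1 := by linarith
        subst this; linarith
      · have e1 := mul_lt_mul_of_pos_left h ha'
        have e2 := mul_le_mul_of_nonneg_left h'.le hb
        linarith
    refine ⟨by positivity, hs _ _ _ _ h2 g2, hs _ _ _ _ h3 g3, ?_⟩
    calc a * x3 + b * y3 ≤ a * L + b * L := by gcongr
      _ = L := by rw [← add_mul, hab, one_mul]
  set N : ℝ × ℝ × ℝ → ℝ := fun q => scTh (p q.1 - o) (p q.2.1 - o) +
    scTh (p q.2.1 - o) (p q.2.2 - o) - scTh (p q.1 - o) (p q.2.2 - o) with hN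
  have hWc : Continuous (fun q : EuclideanSpace ℝ (Fin 2) × EuclideanSpace ℝ (Fin 2) =>
      scW q.1 q.2) := by
    have : Continuous scZ := by
      have : scZ = fun v => ((v 0 : ℝ) : ℂ) + ((v 1 : ℝ) : ℂ) * Complex.I := by
        ext v
        exact (Complex.mk_eq_add_mul_I _ _)
      rw [this]; fun_prop
    unfold scW
    exact (this.comp continuous_snd).mul (Complex.continuous_conj.comp (this.comp continuous_fst))
  have hThc : ∀ f g : ℝ × ℝ × ℝ → ℝ, Continuous f → Continuous g →
      (∀ q ∈ S, 0 ≤ f q ∧ f q < g q ∧ g q ≤ L) →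
      ContinuousOn (fun q => scTh (p (f q) - o) (p (g q) - o)) S := by
    intro f g hf hg hfg
    have hpf : ContinuousOn (fun q => p (f q) - o) S :=
      (hpc.comp hf.continuousOn fun q hq =>
        ⟨(hfg q hq).1, by linarith [(hfg q hq).2.1, (hfg q hq).2.2]⟩).sub continuousOn_const
    have hpg : ContinuousOn (fun q => p (g q) - o) S :=
      (hpc.comp hg.continuousOn fun q hq =>
        ⟨by linarith [(hfg q hq).1, (hfg q hq).2.1], (hfg q hq).2.2⟩).sub continuousOn_const
    have hW : ContinuousOn (fun q => -(scW (p (f q) - o) (p (g q) - o))) S :=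
      (hWc.comp_continuousOn (hpf.prodMk hpg)).neg
    unfold scTh
    refine ContinuousOn.add ?_ continuousOn_const
    intro q hq
    exact ContinuousAt.comp_continuousWithinAt
      (f := fun q => -(scW (p (f q) - o) (p (g q) - o))) (g := Complex.arg)
      (Complex.continuousAt_arg (hslit _ _ (hfg q hq).1 (hfg q hq).2.1
      (hfg q hq).2.2)) (hW q hq)
  have hNc : ContinuousOn N S := by
    refine ContinuousOn.sub (ContinuousOn.add ?_ ?_) ?_
    · exact hThc (fun q => q.1) (fun q => q.2.1) (by fun_prop) (by fun_prop)
        (fun q hq => ⟨hq.1, hq.2.1, by linarith [hq.2.2.1, hq.2.2.2]⟩)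
    · exact hThc (fun q => q.2.1) (fun q => q.2.2) (by fun_prop) (by fun_prop)
        (fun q hq => ⟨by linarith [hq.1, hq.2.1], hq.2.2.1, hq.2.2.2⟩)
    · exact hThc (fun q => q.1) (fun q => q.2.2) (by fun_prop) (by fun_prop)
        (fun q hq => ⟨hq.1, by linarith [hq.2.1, hq.2.2.1], hq.2.2.2⟩)
  have hmaps : Set.MapsTo N S {0, 2 * Real.pi} := by
    rintro ⟨a, b, c⟩ ⟨ha, hab, hbc, hc⟩
    simp only at ha hab hbc hc
    have m1 : a ∈ Set.Icc 0 L := ⟨ha, by linarith⟩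
    have m2 : b ∈ Set.Icc 0 L := ⟨by linarith, by linarith⟩
    have m3 : c ∈ Set.Icc 0 L := ⟨by linarith, hc⟩
    have h1 := sc_th_mem (hslit a b ha hab (by linarith))
    have h2 := sc_th_mem (hslit b c (by linarith) hbc hc)
    have h3 := sc_th_mem (hslit a c ha (by linarith) hc)
    obtain ⟨n, hn⟩ := (Real.cos_eq_one_iff _).mp (sc_th_add (hne a m1) (hne b m2) (hne c m3))
    have hπ := Real.pi_pos
    have hn1 : (-1 : ℤ) < n := by
      have : (-1 : ℝ) < n := by
        by_contra hcon
        push Not at hcon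
        nlinarith
      exact_mod_cast this
    have hn2 : n < (2 : ℤ) := by
      have : (n : ℝ) < 2 := by
        by_contra hcon
        push Not at hcon
        nlinarith
      exact_mod_cast this
    simp only [hN, Set.mem_insert_iff, Set.mem_singleton_iff]
    rw [← hn]
    have : n = 0 ∨ n = 1 := by omega
    rcases this with rfl | rfl
    · left; simp
    · right; simp
  have hdisc : IsDiscrete ({0, 2 * Real.pi} : Set ℝ) := (Set.toFinite _).isDiscrete
  obtain ⟨y, hy, hEq⟩ := hSc.isPreconnected.eqOn_const_of_mapsTo hdisc hNc hmaps ⟨0, by simp⟩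
  have hpos : ∀ t ∈ Set.Icc 0 L, ∀ s ∈ Set.Icc 0 L, 0 < ‖scW (p s - o) (p t - o)‖ := by
    intro t ht s hs
    rw [sc_normW]
    exact mul_pos (sc_normZ_pos (hne s hs)) (sc_normZ_pos (hne t ht))
  rcases hy with rfl | hy
  · refine ⟨1, Or.inl rfl, fun a b c ha hab hbc hc => ?_⟩
    rw [one_mul]
    have m1 : a ∈ Set.Icc 0 L := ⟨ha, by linarith⟩
    have m2 : b ∈ Set.Icc 0 L := ⟨by linarith, by linarith⟩
    have m3 : c ∈ Set.Icc 0 L := ⟨by linarith, hc⟩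
    have h1 := sc_th_mem (hslit a b ha hab (by linarith))
    have h2 := sc_th_mem (hslit b c (by linarith) hbc hc)
    have h3 := sc_th_mem (hslit a c ha (by linarith) hc)
    have h4 : N (a, b, c) = 0 := hEq (show (a, b, c) ∈ S from ⟨ha, hab, hbc, hc⟩)
    simp only [hN] at h4
    have h5 : scTh (p a - o) (p b - o) + scTh (p b - o) (p c - o) = scTh (p a - o) (p c - o) := by
      linarith
    refine sc_det_nonneg hC ho (hpC a m1) (hpC b m2) (hpC c m3) (hpI a m1) (hpI b m2) (hpI c m3)
      h1.1 h2.1 (by rw [h5]; exact h3.2) (hpos b m2 a m1) (hpos c m3 b m2) (hpos c m3 a m1)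
      (sc_sin_th _ _).symm (sc_sin_th _ _).symm ?_
    rw [h5]; exact (sc_sin_th _ _).symm
  · rw [Set.mem_singleton_iff] at hy
    refine ⟨-1, Or.inr rfl, fun a b c ha hab hbc hc => ?_⟩
    have m1 : a ∈ Set.Icc 0 L := ⟨ha, by linarith⟩
    have m2 : b ∈ Set.Icc 0 L := ⟨by linarith, by linarith⟩
    have m3 : c ∈ Set.Icc 0 L := ⟨by linarith, hc⟩
    have h1 := sc_th_mem (hslit a b ha hab (by linarith))
    have h2 := sc_th_mem (hslit b c (by linarith) hbc hc)
    have h3 := sc_th_mem (hslit a c ha (by linarith) hc)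
    have h4 : N (a, b, c) = 2 * Real.pi := by
      rw [← hy]; exact hEq (show (a, b, c) ∈ S from ⟨ha, hab, hbc, hc⟩)
    simp only [hN] at h4
    have hsw : ∀ v w : EuclideanSpace ℝ (Fin 2), scDet w v =
        ‖scW v w‖ * Real.sin (2 * Real.pi - scTh v w) := by
      intro v w
      rw [Real.sin_two_pi_sub, mul_neg, sc_sin_th]
      simp [scDet]; ring
    have h5 : 2 * Real.pi - scTh (p b - o) (p c - o) + (2 * Real.pi - scTh (p a - o) (p b - o)) =
      2 * Real.pi - scTh (p a - o) (p c - o) := by linarith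
    have := sc_det_nonneg hC ho (hpC c m3) (hpC b m2) (hpC a m1) (hpI c m3) (hpI b m2) (hpI a m1)
      (α := 2 * Real.pi - scTh (p b - o) (p c - o)) (β := 2 * Real.pi - scTh (p a - o) (p b - o))
      (by linarith) (by linarith) (by linarith)
      (hpos c m3 b m2) (hpos b m2 a m1) (hpos c m3 a m1) (hsw _ _) (hsw _ _)
      (by rw [h5]; exact hsw _ _)
    convert this using 1
    simp [scDet]; ring

lemma sc_int_of_det {C : Set (EuclideanSpace ℝ (Fin 2))} (hC : Convex ℝ C)
    {P Q R : EuclideanSpace ℝ (Fin 2)} (hP : P ∈ C) (hQ : Q ∈ C) (hR : R ∈ C)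
    (hD : scDet (Q - P) (R - P) ≠ 0) : (interior C).Nonempty := by
  set D := scDet (Q - P) (R - P) with hDdef
  set f : EuclideanSpace ℝ (Fin 2) → ℝ := fun x => scDet (x - P) (R - P) / D with hf
  set g : EuclideanSpace ℝ (Fin 2) → ℝ := fun x => scDet (Q - P) (x - P) / D with hg
  have hfc : Continuous f := by
    simp only [hf, scDet, PiLp.sub_apply]; fun_prop
  have hgc : Continuous g := by
    simp only [hg, scDet, PiLp.sub_apply]; fun_prop
  set U : Set (EuclideanSpace ℝ (Fin 2)) := {x | 0 < f x} ∩ {x | 0 < g x} ∩ {x | f x + g x < 1}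
    with hU
  have hUo : IsOpen U := ((isOpen_lt continuous_const hfc).inter
    (isOpen_lt continuous_const hgc)).inter (isOpen_lt (hfc.add hgc) continuous_const)
  have hUC : U ⊆ C := by
    rintro x ⟨⟨h1, h2⟩, h3⟩
    simp only [Set.mem_ofPred_eq] at h1 h2 h3
    have hx : x = (1 - (f x + g x)) • P + f x • Q + g x • R := by
      ext i
      simp only [PiLp.add_apply, PiLp.smul_apply, smul_eq_mul, hf, hg]
      field_simp
      rw [hDdef]
      fin_cases i <;> simp [scDet] <;> ring
    rw [hx]
    have h4 : 0 < f x + g x := by linarith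
    have hy : (f x / (f x + g x)) • Q + (g x / (f x + g x)) • R ∈ C :=
      hC hQ hR (by positivity) (by positivity) (by field_simp)
    have := hC hP hy (a := 1 - (f x + g x)) (b := f x + g x) (by linarith) h4.le (by ring)
    convert this using 1
    rw [smul_add, smul_smul, smul_smul, mul_div_cancel₀ _ h4.ne', mul_div_cancel₀ _ h4.ne',
      add_assoc]
  have hmem : (P + (1/3 : ℝ) • (Q - P) + (1/3 : ℝ) • (R - P)) ∈ U := by
    have e1 : f (P + (1/3 : ℝ) • (Q - P) + (1/3 : ℝ) • (R - P)) = 1 / 3 := by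
      simp only [hf]
      rw [div_eq_iff hD, hDdef]
      simp [scDet]; ring
    have e2 : g (P + (1/3 : ℝ) • (Q - P) + (1/3 : ℝ) • (R - P)) = 1 / 3 := by
      simp only [hg]
      rw [div_eq_iff hD, hDdef]
      simp [scDet]; ring
    refine ⟨⟨?_, ?_⟩, ?_⟩ <;> simp only [Set.mem_ofPred_eq, e1, e2] <;> norm_num
  exact ⟨_, interior_maximal hUC hUo hmem⟩

lemma sc_orient {C : Set (EuclideanSpace ℝ (Fin 2))} (hC : Convex ℝ C) (hCc : IsClosed C) {L : ℝ}
    {p : ℝ → EuclideanSpace ℝ (Fin 2)} (hpc : ContinuousOn p (Set.Icc 0 L))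
    (hinj : Set.InjOn p (Set.Icc 0 L)) (hpC : ∀ t ∈ Set.Icc 0 L, p t ∈ frontier C) :
    ∃ σ : ℝ, (σ = 1 ∨ σ = -1) ∧ ∀ a b c, 0 ≤ a → a < b → b < c → c ≤ L →
      0 ≤ σ * scDet (p b - p a) (p c - p a) := by
  have hin : ∀ t ∈ Set.Icc 0 L, p t ∈ C := fun t ht => hCc.frontier_subset (hpC t ht)
  by_cases hI : (interior C).Nonempty
  · obtain ⟨o, ho⟩ := hI
    exact sc_orient_int hC ho hpc hinj hin (fun t ht => (hpC t ht).2)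
  · refine ⟨1, Or.inl rfl, fun a b c ha hab hbc hc => ?_⟩
    by_contra h
    apply hI
    refine sc_int_of_det hC (hin a ⟨ha, by linarith⟩) (hin b ⟨by linarith, by linarith⟩)
      (hin c ⟨by linarith, hc⟩) ?_
    intro h0
    rw [h0] at h
    simp at h

end PartOrientation

/-! ### Planar analysis -/

/-- Scalar data of a planar convex arc in adapted coordinates. -/
structure ScC0 (x y : ℝ → ℝ) (L t0 : ℝ) : Prop where
  hx : ContinuousOn x (Set.Icc 0 L)
  hy : ContinuousOn y (Set.Icc 0 L)
  inj : ∀ s ∈ Set.Icc 0 L, ∀ t ∈ Set.Icc 0 L, x s = x t → y s = y t → s = t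
  D : ∀ a b c, 0 ≤ a → a < b → b < c → c ≤ L →
    0 ≤ (x b - x a) * (y c - y a) - (y b - y a) * (x c - x a)
  y0 : y 0 = 0
  yL : y L = 0
  x0L : x 0 < x L
  ht0 : t0 ∈ Set.Ioo 0 L
  hmin : ∀ t ∈ Set.Icc 0 L, y t0 ≤ y t

lemma ScC0.refl {x y : ℝ → ℝ} {L t0 : ℝ} (h : ScC0 x y L t0) :
    ScC0 (fun t => - x (L - t)) (fun t => y (L - t)) L (L - t0) := by
  have hm : ∀ t ∈ Set.Icc 0 L, L - t ∈ Set.Icc 0 L := fun t ht => by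
    constructor <;> linarith [ht.1, ht.2]
  have hc : ContinuousOn (fun t : ℝ => L - t) (Set.Icc 0 L) := by fun_prop
  refine ⟨(h.hx.comp hc hm).neg, h.hy.comp hc hm, ?_, ?_, ?_, ?_, ?_, ?_, ?_⟩
  · intro s hs t ht h1 h2
    have := h.inj _ (hm s hs) _ (hm t ht) (by linarith) h2
    linarith
  · intro a b c ha hab hbc hc
    have := h.D (L - c) (L - b) (L - a) (by linarith) (by linarith) (by linarith) (by linarith)
    nlinarith [this]
  · simp [h.yL]
  · simp [h.y0]
  · simp [h.x0L]
  · constructor <;> linarith [h.ht0.1, h.ht0.2]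
  · intro t ht
    simpa using h.hmin _ (hm t ht)

lemma ScC0.ynonpos {x y : ℝ → ℝ} {L t0 : ℝ} (h : ScC0 x y L t0) {t : ℝ} (ht : t ∈ Set.Icc 0 L) :
    y t ≤ 0 := by
  rcases ht.1.eq_or_lt with h0 | h0
  · rw [← h0, h.y0]
  rcases ht.2.eq_or_lt with h1 | h1
  · rw [h1, h.yL]
  have := h.D 0 t L le_rfl h0 h1 le_rfl
  rw [h.y0, h.yL] at this
  have := h.x0L
  by_contra hc
  push Not at hc
  nlinarith

lemma ScC0.mono_after {x y : ℝ → ℝ} {L t0 : ℝ} (h : ScC0 x y L t0) {a b : ℝ} (ha : t0 ≤ a)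
    (hab : a ≤ b) (hb : b ≤ L) : y a ≤ y b := by
  by_contra hlt
  push Not at hlt
  have h0 := h.ht0
  have hab' : a < b := lt_of_le_of_ne hab (by rintro rfl; exact lt_irrefl _ hlt)
  have hbL : b < L := by
    refine lt_of_le_of_ne hb ?_
    rintro rfl
    rw [h.yL] at hlt
    have := h.ynonpos (t := a) ⟨by linarith [h0.1], hab⟩
    linarith
  obtain ⟨a', ha', hya'⟩ : y b ∈ y '' Set.Icc t0 a := by
    refine intermediate_value_Icc ha (h.hy.mono ?_) ⟨h.hmin b ⟨by linarith [h0.1], hb⟩, hlt.le⟩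
    exact Set.Icc_subset_Icc h0.1.le (by linarith)
  have ha'a : a' < a := lt_of_le_of_ne ha'.2 (by rintro rfl; linarith)
  have ha'0 : 0 ≤ a' := by linarith [ha'.1, h0.1]
  have d1 := h.D a' a b ha'0 ha'a hab' hb
  have d2 := h.D a' a L ha'0 ha'a (by linarith) le_rfl
  have d3 := h.D a' b L ha'0 (by linarith) hbL le_rfl
  have d4 := h.D a b L (by linarith) hab' hbL le_rfl
  have hy0 := h.ynonpos (t := a) ⟨by linarith, by linarith⟩
  have hne : x a' ≠ x b := fun hx => by
    have := h.inj a' ⟨ha'0, by linarith⟩ b ⟨by linarith, hb⟩ hx hya'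
    linarith
  rw [h.yL] at d2 d3 d4
  rw [hya'] at d1 d2 d3
  -- with `yb < ya ≤ 0`
  have e1 : 0 ≤ (y a - y b) * (x a' - x b) := by nlinarith
  have hk : 0 < x a' - x b := by
    rcases lt_or_gt_of_ne hne with hh | hh
    · nlinarith
    · linarith
  have hyb : y b < 0 := by linarith
  nlinarith [mul_pos (neg_pos.2 hyb) hk]

lemma ScC0.anti_before {x y : ℝ → ℝ} {L t0 : ℝ} (h : ScC0 x y L t0) {a b : ℝ} (ha : 0 ≤ a)
    (hab : a ≤ b) (hb : b ≤ t0) : y b ≤ y a := by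
  have := h.refl.mono_after (a := L - b) (b := L - a) (by linarith) (by linarith) (by linarith)
  simpa using this

lemma ScC0.strict {x y : ℝ → ℝ} {L t0 : ℝ} (h : ScC0 x y L t0) {a c : ℝ} (ha : 0 ≤ a)
    (hac : a ≤ c) (hc : c ≤ L) (hy : ∀ t ∈ Set.Icc a c, y t = y a) :
    StrictMonoOn x (Set.Icc a c) ∨ StrictAntiOn x (Set.Icc a c) := by
  have hs : Set.Icc a c ⊆ Set.Icc 0 L := Set.Icc_subset_Icc ha hc
  refine ContinuousOn.strictMonoOn_of_injOn_Icc' hac (h.hx.mono hs) ?_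
  intro s hs' t ht' hst
  exact h.inj s (hs hs') t (hs ht') hst (by rw [hy s hs', hy t ht'])

lemma ScC0.noflip_after {x y : ℝ → ℝ} {L t0 : ℝ} (h : ScC0 x y L t0) {a b c : ℝ} (ha : t0 ≤ a)
    (hab : a < b) (hbc : b < c) (hc : c ≤ L) (hy : y c = y a) (h1 : x b < x a) :
    x c < x b := by
  have h0 := h.ht0
  have hA : a ∈ Set.Icc a c := ⟨le_rfl, by linarith⟩
  have hB : b ∈ Set.Icc a c := ⟨by linarith, by linarith⟩
  have hCC : c ∈ Set.Icc a c := ⟨by linarith, le_rfl⟩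
  rcases h.strict (a := a) (c := c) (by linarith [h0.1]) (by linarith) hc (by
    intro t ht
    have e1 := h.mono_after ha ht.1 (by linarith [ht.2])
    have e2 := h.mono_after (a := t) (b := c) (by linarith [ht.1]) ht.2 hc
    linarith) with hs | hs
  · have := hs hA hB hab
    linarith
  · exact hs hB hCC hbc

lemma ScC0.noflip_before {x y : ℝ → ℝ} {L t0 : ℝ} (h : ScC0 x y L t0) {a b c : ℝ} (ha : 0 ≤ a)
    (hab : a < b) (hbc : b < c) (hc : c ≤ t0) (hy : y c = y a) (h1 : x c < x b) :
    x b < x a := by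
  have := h.refl.noflip_after (a := L - c) (b := L - b) (c := L - a) (by linarith) (by linarith)
    (by linarith) (by linarith) (by simp [hy]) (by simpa using h1)
  simpa using this

lemma ScC0.crossing {x y : ℝ → ℝ} {L t0 : ℝ} (h : ScC0 x y L t0) {a b : ℝ} (ha : 0 ≤ a)
    (ha0 : a < t0) (hb0 : t0 < b) (hb : b ≤ L) (hy : y a = y b) : x a < x b := by
  by_contra hlt
  push Not at hlt
  have hne : x a ≠ x b := fun hx => by
    have := h.inj a ⟨ha, by linarith⟩ b ⟨by linarith, hb⟩ hx hy
    linarith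
  have hlt' : x b < x a := lt_of_le_of_ne hlt (Ne.symm hne)
  have hya : y a = 0 := by
    rcases ha.eq_or_lt with h0 | h0
    · rw [← h0, h.y0]
    have := h.D 0 a b le_rfl h0 (by linarith) hb
    rw [h.y0, ← hy] at this
    have e := h.ynonpos (t := a) ⟨ha, by linarith⟩
    by_contra hc
    have : y a < 0 := lt_of_le_of_ne e hc
    nlinarith
  have ht : y t0 = 0 := by
    have := h.D a t0 b ha ha0 hb0 hb
    rw [← hy, hya] at this
    have e := h.hmin a ⟨ha, by linarith⟩
    rw [hya] at e
    by_contra hc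
    have : y t0 < 0 := lt_of_le_of_ne e hc
    nlinarith
  have hL : (0:ℝ) ≤ L := by linarith
  have hm0 : (0:ℝ) ∈ Set.Icc 0 L := ⟨le_rfl, hL⟩
  have hmL : L ∈ Set.Icc 0 L := ⟨hL, le_rfl⟩
  have hma : a ∈ Set.Icc 0 L := ⟨ha, by linarith⟩
  have hmb : b ∈ Set.Icc 0 L := ⟨by linarith, hb⟩
  rcases h.strict le_rfl hL le_rfl (by
    intro t htt
    rw [h.y0]
    exact le_antisymm (h.ynonpos htt) (ht ▸ h.hmin t htt)) with hs | hs
  · have := hs hma hmb (by linarith)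
    linarith
  · have := hs hm0 hmL (by linarith [h.ht0.1, h.ht0.2])
    linarith [h.x0L]

/-- Scalar data of a planar convex arc, up to a vertical shift. -/
def ScC (x y : ℝ → ℝ) (L t0 : ℝ) : Prop := ScC0 x (fun t => y t - y 0) L t0

lemma ScC.inj {x y : ℝ → ℝ} {L t0 : ℝ} (h : ScC x y L t0) :
    ∀ s ∈ Set.Icc 0 L, ∀ t ∈ Set.Icc 0 L, x s = x t → y s = y t → s = t :=
  fun s hs t ht h1 h2 => ScC0.inj h s hs t ht h1 (by simp [h2])

lemma ScC.D {x y : ℝ → ℝ} {L t0 : ℝ} (h : ScC x y L t0) :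
    ∀ a b c, 0 ≤ a → a < b → b < c → c ≤ L →
    0 ≤ (x b - x a) * (y c - y a) - (y b - y a) * (x c - x a) :=
  fun a b c h1 h2 h3 h4 => by simpa using ScC0.D h a b c h1 h2 h3 h4

lemma ScC.ht0 {x y : ℝ → ℝ} {L t0 : ℝ} (h : ScC x y L t0) : t0 ∈ Set.Ioo 0 L := ScC0.ht0 h

lemma ScC.mono_after {x y : ℝ → ℝ} {L t0 : ℝ} (h : ScC x y L t0) {a b : ℝ} (ha : t0 ≤ a)
    (hab : a ≤ b) (hb : b ≤ L) : y a ≤ y b := by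
  simpa using ScC0.mono_after h ha hab hb

lemma ScC.anti_before {x y : ℝ → ℝ} {L t0 : ℝ} (h : ScC x y L t0) {a b : ℝ} (ha : 0 ≤ a)
    (hab : a ≤ b) (hb : b ≤ t0) : y b ≤ y a := by
  simpa using ScC0.anti_before h ha hab hb

lemma ScC.noflip_after {x y : ℝ → ℝ} {L t0 : ℝ} (h : ScC x y L t0) {a b c : ℝ} (ha : t0 ≤ a)
    (hab : a < b) (hbc : b < c) (hc : c ≤ L) (hy : y c = y a) (h1 : x b < x a) :
    x c < x b :=
  ScC0.noflip_after h ha hab hbc hc (by simp [hy]) h1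

lemma ScC.noflip_before {x y : ℝ → ℝ} {L t0 : ℝ} (h : ScC x y L t0) {a b c : ℝ} (ha : 0 ≤ a)
    (hab : a < b) (hbc : b < c) (hc : c ≤ t0) (hy : y c = y a) (h1 : x c < x b) :
    x b < x a :=
  ScC0.noflip_before h ha hab hbc hc (by simp [hy]) h1

lemma ScC.crossing {x y : ℝ → ℝ} {L t0 : ℝ} (h : ScC x y L t0) {a b : ℝ} (ha : 0 ≤ a)
    (ha0 : a < t0) (hb0 : t0 < b) (hb : b ≤ L) (hy : y a = y b) : x a < x b :=
  ScC0.crossing h ha ha0 hb0 hb (by simp [hy])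

section plane
variable {F : Type*} [NormedAddCommGroup F] [InnerProductSpace ℝ F]

open InnerProductGeometry

/-- Orthonormal coordinates on a plane. -/
structure ScS (X Y : F →ₗ[ℝ] ℝ) (e : F) : Prop where
  inn : ∀ v w : F, ⟪v, w⟫ = X v * X w + Y v * Y w
  Xe : X e = 1
  Ye : Y e = 0

lemma ScS.neg {X Y : F →ₗ[ℝ] ℝ} {e : F} (h : ScS X Y e) : ScS X (-Y) e :=
  ⟨fun v w => by simp [h.inn], h.Xe, by simp [h.Ye]⟩

lemma ScS.norm_e {X Y : F →ₗ[ℝ] ℝ} {e : F} (h : ScS X Y e) : ‖e‖ = 1 := by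
  have := real_inner_self_eq_norm_sq e
  rw [h.inn, h.Xe, h.Ye] at this
  have h2 := norm_nonneg e
  nlinarith

lemma ScS.nsq {X Y : F →ₗ[ℝ] ℝ} {e : F} (h : ScS X Y e) (v : F) :
    ‖v‖ ^ 2 = X v ^ 2 + Y v ^ 2 := by
  rw [← real_inner_self_eq_norm_sq, h.inn]; ring

lemma ScS.cos {X Y : F →ₗ[ℝ] ℝ} {e : F} (h : ScS X Y e) (v : F) :
    Real.cos (angle e v) * ‖v‖ = X v := by
  have := cos_angle_mul_norm_mul_norm e v
  rw [h.norm_e, h.inn, h.Xe, h.Ye] at this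
  linarith

lemma ScS.sin {X Y : F →ₗ[ℝ] ℝ} {e : F} (h : ScS X Y e) {v : F} (hv : 0 ≤ Y v) :
    Real.sin (angle e v) * ‖v‖ = Y v := by
  have h1 := h.cos v
  have h2 := h.nsq v
  have h3 := Real.sin_sq_add_cos_sq (angle e v)
  have h4 : 0 ≤ Real.sin (angle e v) * ‖v‖ :=
    mul_nonneg (sin_angle_nonneg e v) (norm_nonneg v)
  rw [← pow_left_inj₀ h4 hv two_ne_zero]
  rw [← h1] at h2
  nlinarith

lemma ScS.upper {X Y : F →ₗ[ℝ] ℝ} {e : F} (h : ScS X Y e) {v w : F} (hv0 : v ≠ 0) (hw0 : w ≠ 0)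
    (hv : 0 ≤ Y v) (hw : 0 ≤ Y w) (hd : 0 ≤ X v * Y w - Y v * X w)
    (hex : Y v = 0 → Y w = 0 → X v < 0 → X w ≤ 0) :
    angle v w = angle e w - angle e v := by
  have nv := norm_pos_iff.2 hv0
  have nw := norm_pos_iff.2 hw0
  have cv := h.cos v
  have cw := h.cos w
  have sv := h.sin hv
  have sw := h.sin hw
  have hs : Real.sin (angle e w - angle e v) * (‖v‖ * ‖w‖) = X v * Y w - Y v * X w := by
    rw [Real.sin_sub, ← cv, ← cw, ← sv, ← sw]; ring
  have hc : Real.cos (angle e w - angle e v) = Real.cos (angle v w) := by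
    rw [cos_angle, eq_div_iff (by positivity), h.inn, Real.cos_sub, ← cv, ← cw, ← sv, ← sw]; ring
  have hs0 : 0 ≤ Real.sin (angle e w - angle e v) := by
    by_contra hcc
    push Not at hcc
    have := mul_pos nv nw
    nlinarith
  have a1 := angle_nonneg e v
  have a2 := angle_le_pi e v
  have a3 := angle_nonneg e w
  have a4 := angle_le_pi e w
  have hnn : 0 ≤ angle e w - angle e v := by
    by_contra hcc
    push Not at hcc
    rcases (show -Real.pi ≤ angle e w - angle e v by linarith).eq_or_lt with hh | hh
    · have hA : angle e w = 0 := by linarith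
      have hB : angle e v = Real.pi := by linarith
      rw [hA] at cw sw
      rw [hB] at cv sv
      simp at cw sw cv sv
      have := hex sv.symm sw.symm (by linarith)
      linarith
    · have := Real.sin_neg_of_neg_of_neg_pi_lt hcc hh
      linarith
  exact Real.injOn_cos ⟨angle_nonneg v w, angle_le_pi v w⟩ ⟨hnn, by linarith⟩ hc.symm

lemma ScS.lower {X Y : F →ₗ[ℝ] ℝ} {e : F} (h : ScS X Y e) {v w : F} (hv0 : v ≠ 0) (hw0 : w ≠ 0)
    (hv : Y v ≤ 0) (hw : Y w ≤ 0) (hd : 0 ≤ X v * Y w - Y v * X w)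
    (hex : Y v = 0 → Y w = 0 → X w < 0 → X v ≤ 0) :
    angle v w = angle e v - angle e w := by
  rw [angle_comm v w]
  refine h.neg.upper hw0 hv0 (by simpa using hw) (by simpa using hv) ?_ ?_
  · simp; linarith
  · intro h1 h2 h3
    simp at h1 h2
    exact hex h2 h1 h3

/-- Whether an edge counts as nonnegatively inclined. -/
def scPos (y : ℝ → ℝ) (t0 a b : ℝ) : Prop := t0 ≤ a ∨ (t0 < b ∧ y a ≤ y b)

open Classical in
/-- The signed angle of an edge with the base direction. -/
noncomputable def scPhi (p : ℝ → F) (Y : F →ₗ[ℝ] ℝ) (e : F) (t0 a b : ℝ) : ℝ :=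
  if scPos (fun t => Y (p t)) t0 a b then angle e (p b - p a) else - angle e (p b - p a)

lemma scPhi_pos {p : ℝ → F} {Y : F →ₗ[ℝ] ℝ} {e : F} {t0 a b : ℝ}
    (h : scPos (fun t => Y (p t)) t0 a b) : scPhi p Y e t0 a b = angle e (p b - p a) := if_pos h

lemma scPhi_neg {p : ℝ → F} {Y : F →ₗ[ℝ] ℝ} {e : F} {t0 a b : ℝ}
    (h : ¬ scPos (fun t => Y (p t)) t0 a b) : scPhi p Y e t0 a b = - angle e (p b - p a) := if_neg h

lemma sc_turn {X Y : F →ₗ[ℝ] ℝ} {e : F} (hS : ScS X Y e) {p : ℝ → F} {L t0 : ℝ}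
    (hC : ScC (fun t => X (p t)) (fun t => Y (p t)) L t0) {a b c : ℝ} (ha : 0 ≤ a) (hab : a < b)
    (hbc : b < c) (hc : c ≤ L) :
    angle (p b - p a) (p c - p b) ≤ scPhi p Y e t0 b c - scPhi p Y e t0 a b := by
  have hne : ∀ s t, 0 ≤ s → s < t → t ≤ L → p t - p s ≠ 0 := by
    intro s t hs hst ht h0
    have h1 := sub_eq_zero.1 h0
    have := hC.inj s ⟨hs, by linarith⟩ t ⟨by linarith, ht⟩ (by simp [h1]) (by simp [h1])
    linarith
  have hv := hne a b ha hab (by linarith)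
  have hw := hne b c (by linarith) hbc hc
  have hd : 0 ≤ X (p b - p a) * Y (p c - p b) - Y (p b - p a) * X (p c - p b) := by
    have := hC.D a b c ha hab hbc hc
    simp only [map_sub]
    linarith
  by_cases P1 : scPos (fun t => Y (p t)) t0 a b
  · have P2 : scPos (fun t => Y (p t)) t0 b c := by
      rcases P1 with P | P
      · exact Or.inl (by linarith)
      · exact Or.inl P.1.le
    have ht0b : t0 ≤ b := by
      rcases P1 with P | P
      · linarith
      · exact P.1.le
    rw [scPhi_pos P1, scPhi_pos P2]
    have y1 : 0 ≤ Y (p b - p a) := by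
      rw [map_sub, sub_nonneg]
      rcases P1 with P | P
      · exact hC.mono_after P hab.le (by linarith)
      · exact P.2
    have y2 : 0 ≤ Y (p c - p b) := by
      rw [map_sub, sub_nonneg]
      exact hC.mono_after ht0b hbc.le hc
    refine (hS.upper hv hw y1 y2 hd ?_).le
    intro e1 e2 e3
    simp only [map_sub] at e1 e2 e3 ⊢
    by_cases hta : t0 ≤ a
    · have := hC.noflip_after hta hab hbc hc (by linarith) (by linarith)
      linarith
    · push Not at hta
      rcases P1 with P | P
      · linarith
      · have := hC.crossing ha hta P.1 (by linarith) (by linarith)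
        linarith
  · rw [scPhi_neg P1]
    have P1' := P1
    simp only [scPos, not_or, not_and, not_le] at P1'
    have y1 : Y (p b - p a) ≤ 0 := by
      rw [map_sub, sub_nonpos]
      by_cases hb : t0 < b
      · exact (P1'.2 hb).le
      · exact hC.anti_before ha hab.le (by linarith)
    by_cases P2 : scPos (fun t => Y (p t)) t0 b c
    · rw [scPhi_pos P2]
      have := angle_le_angle_add_angle (p b - p a) e (p c - p b)
      rw [angle_comm (p b - p a) e] at this
      linarith
    · rw [scPhi_neg P2]
      simp only [scPos, not_or, not_and, not_le] at P2
      have y2 : Y (p c - p b) ≤ 0 := by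
        rw [map_sub, sub_nonpos]
        by_cases hb : t0 < c
        · exact (P2.2 hb).le
        · exact hC.anti_before (by linarith) hbc.le (by linarith)
      have := (hS.lower hv hw y1 y2 hd ?_).le
      · linarith
      intro e1 e2 e3
      simp only [map_sub] at e1 e2 e3 ⊢
      by_cases hb : t0 < c
      · linarith [P2.2 hb]
      · have := hC.noflip_before ha hab hbc (by linarith) (by linarith) (by linarith)
        linarith

end plane

section tangent
variable {F : Type*} [NormedAddCommGroup F] [InnerProductSpace ℝ F]

open InnerProductGeometry Topology

lemma sc_right {p : ℝ → F} {s : ℝ} {τ : F} (h : HasDerivAt p τ s) :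
    Tendsto (fun h : ℝ => h⁻¹ • (p (s + h) - p s)) (𝓝[>] 0) (𝓝 τ) :=
  (hasDerivAt_iff_tendsto_slope_zero.1 h).mono_left (nhdsGT_le_nhdsNE 0)

lemma sc_left {p : ℝ → F} {s : ℝ} {τ : F} (h : HasDerivAt p τ s) :
    Tendsto (fun h : ℝ => h⁻¹ • (p s - p (s - h))) (𝓝[>] 0) (𝓝 τ) := by
  have h1 : HasDerivAt (fun t => - p (-t)) τ (-s) := by
    have h2 : HasDerivAt p τ (- -s) := by rwa [neg_neg]
    have := (h2.scomp (-s) (hasDerivAt_neg (-s))).neg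
    simp only [neg_smul, one_smul, neg_neg] at this
    exact this
  have := sc_right h1
  refine this.congr fun h => ?_
  simp only [neg_add, neg_neg]
  congr 1
  rw [← sub_eq_add_neg]
  abel

lemma sc_right_angle {p : ℝ → F} {s : ℝ} {τ e : F} (he : e ≠ 0) (hτ : τ ≠ 0)
    (h : HasDerivAt p τ s) :
    Tendsto (fun h : ℝ => angle e (p (s + h) - p s)) (𝓝[>] 0) (𝓝 (angle e τ)) := by
  have h1 := (continuousAt_angle (x := (e, τ)) he hτ).tendsto.comp
    ((tendsto_const_nhds (x := e)).prodMk_nhds (sc_right h))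
  refine h1.congr' ?_
  filter_upwards [self_mem_nhdsWithin] with h hh
  simp only [Function.comp]
  exact angle_smul_right_of_pos _ _ (inv_pos.2 hh)

lemma sc_left_angle {p : ℝ → F} {s : ℝ} {τ e : F} (he : e ≠ 0) (hτ : τ ≠ 0)
    (h : HasDerivAt p τ s) :
    Tendsto (fun h : ℝ => angle e (p s - p (s - h))) (𝓝[>] 0) (𝓝 (angle e τ)) := by
  have h1 := (continuousAt_angle (x := (e, τ)) he hτ).tendsto.comp
    ((tendsto_const_nhds (x := e)).prodMk_nhds (sc_left h))
  refine h1.congr' ?_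
  filter_upwards [self_mem_nhdsWithin] with h hh
  simp only [Function.comp]
  exact angle_smul_right_of_pos _ _ (inv_pos.2 hh)

open Classical in
/-- Signed tangent angle. -/
noncomputable def scTan (e : F) (t0 s : ℝ) (τ : F) : ℝ := if t0 < s then angle e τ else - angle e τ

variable {X Y : F →ₗ[ℝ] ℝ} {e : F} {p : ℝ → F} {L t0 : ℝ}

lemma sc_phi_mono (hS : ScS X Y e) (hC : ScC (fun t => X (p t)) (fun t => Y (p t)) L t0)
    {a b c d : ℝ} (ha : 0 ≤ a) (hab : a < b) (hbc : b ≤ c) (hcd : c < d) (hd : d ≤ L) :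
    scPhi p Y e t0 a b ≤ scPhi p Y e t0 c d := by
  have key : ∀ a b c, 0 ≤ a → a < b → b < c → c ≤ L →
      scPhi p Y e t0 a b ≤ scPhi p Y e t0 b c := by
    intro a b c h1 h2 h3 h4
    have := sc_turn hS hC h1 h2 h3 h4
    have := angle_nonneg (p b - p a) (p c - p b)
    linarith
  rcases hbc.eq_or_lt with rfl | h
  · exact key _ _ _ ha hab hcd hd
  · exact (key a b c ha hab h (by linarith)).trans (key b c d (by linarith) h hcd hd)

lemma ScS.e_ne (hS : ScS X Y e) : e ≠ 0 := by
  rintro rfl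
  have := hS.Xe
  simp at this

lemma sc_tan_le (hS : ScS X Y e) (hC : ScC (fun t => X (p t)) (fun t => Y (p t)) L t0)
    {s a b : ℝ} {τ : F} (hs : 0 < s) (hst : s ≠ t0) (hτ : τ ≠ 0) (hd : HasDerivAt p τ s)
    (hsa : s ≤ a) (hab : a < b) (hb : b ≤ L) : scTan e t0 s τ ≤ scPhi p Y e t0 a b := by
  have hlim := sc_left_angle hS.e_ne hτ hd
  have hsm : ∀ᶠ h : ℝ in 𝓝[>] 0, h < s := by
    filter_upwards [Ioo_mem_nhdsGT hs] with h hh using hh.2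
  rcases lt_or_gt_of_ne hst with h0 | h0
  · rw [scTan, if_neg (by linarith)]
    refine le_of_tendsto hlim.neg ?_
    filter_upwards [hsm, self_mem_nhdsWithin] with h h1 h2
    have h2 : 0 < h := h2
    rw [← scPhi_neg (Y := Y) (t0 := t0)]
    · exact sc_phi_mono hS hC (by linarith) (by linarith) hsa hab hb
    · rintro (h3 | h3)
      · linarith
      · linarith [h3.1]
  · rw [scTan, if_pos h0]
    refine le_of_tendsto hlim ?_
    filter_upwards [hsm, Ioo_mem_nhdsGT (sub_pos.2 h0)] with h h1 h2
    rw [← scPhi_pos (Y := Y) (t0 := t0)]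
    · exact sc_phi_mono hS hC (by linarith) (by linarith [h2.1]) hsa hab hb
    · exact Or.inl (by linarith [h2.2])

lemma sc_le_tan (hS : ScS X Y e) (hC : ScC (fun t => X (p t)) (fun t => Y (p t)) L t0)
    {t a b : ℝ} {τ : F} (ht : t < L) (hst : t ≠ t0) (hτ : τ ≠ 0) (hd : HasDerivAt p τ t)
    (ha : 0 ≤ a) (hab : a < b) (hb : b ≤ t) : scPhi p Y e t0 a b ≤ scTan e t0 t τ := by
  have hlim := sc_right_angle hS.e_ne hτ hd
  rcases lt_or_gt_of_ne hst with h0 | h0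
  · rw [scTan, if_neg (by linarith)]
    refine ge_of_tendsto hlim.neg ?_
    filter_upwards [Ioo_mem_nhdsGT (sub_pos.2 ht), Ioo_mem_nhdsGT (sub_pos.2 h0)] with h h1 h2
    rw [← scPhi_neg (Y := Y) (t0 := t0)]
    · exact sc_phi_mono hS hC ha hab hb (by linarith [h1.1]) (by linarith [h1.2])
    · rintro (h3 | h3)
      · linarith
      · linarith [h3.1, h2.2]
  · rw [scTan, if_pos h0]
    refine ge_of_tendsto hlim ?_
    filter_upwards [Ioo_mem_nhdsGT (sub_pos.2 ht)] with h h1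
    rw [← scPhi_pos (Y := Y) (t0 := t0)]
    · exact sc_phi_mono hS hC ha hab hb (by linarith [h1.1]) (by linarith [h1.2])
    · exact Or.inl h0.le

lemma sc_vertex_succ {G : Type*} (γ : ℝ → G) (m : ℕ) (u : ℕ → ℝ) :
    vertexList γ (m + 1) u = γ (u 0) :: vertexList γ m (fun i => u (i + 1)) := by
  unfold vertexList
  rw [List.range_succ_eq_map]
  simp [Function.comp_def]

lemma sc_vertex_zero {G : Type*} (γ : ℝ → G) (u : ℕ → ℝ) :
    vertexList γ 0 u = [γ (u 0)] := by
  simp [vertexList]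

lemma sc_turn_poly (hS : ScS X Y e) (hC : ScC (fun t => X (p t)) (fun t => Y (p t)) L t0)
    (Ψ : ℝ) (m : ℕ) : ∀ u : ℕ → ℝ, InscribedIn 0 L (m + 1) u →
      scPhi p Y e t0 (u m) (u (m + 1)) ≤ Ψ →
      turnSum (vertexList p (m + 1) u) ≤ Ψ - scPhi p Y e t0 (u 0) (u 1) := by
  induction m with
  | zero =>
    intro u hu h
    rw [sc_vertex_succ, sc_vertex_zero]
    simp only [turnSum]
    simp only [zero_add] at h
    linarith
  | succ m ih =>
    intro u hu h
    have h1 := ih (fun i => u (i + 1))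
      ⟨fun i hi => hu.1 (i + 1) (by omega), fun i hi => hu.2 (i + 1) (by omega)⟩ h
    rw [sc_vertex_succ] at h1
    rw [sc_vertex_succ, sc_vertex_succ]
    have h2 := sc_turn hS hC (hu.2 0 (by omega)).1 (hu.1 0 (by omega)) (hu.1 1 (by omega))
      (hu.2 2 (by omega)).2
    rcases hl : vertexList p m (fun i => u (i + 1 + 1)) with _ | ⟨c, l⟩
    · simp [vertexList] at hl
    · have hc : c = p (u 2) := by
        cases m with
        | zero => rw [sc_vertex_zero] at hl; simp at hl; exact hl.1.symm
        | succ k => rw [sc_vertex_succ] at hl; simp at hl; exact hl.1.symm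
      rw [hl] at h1
      subst hc
      simp only [turnSum]
      simp only [zero_add] at h1 h2 ⊢
      norm_num at h1 h2 ⊢
      linarith

lemma sc_collapse_id {G : Type*} {γ : ℝ → G} {L : ℝ} (hinj : Set.InjOn γ (Set.Icc 0 L)) {m : ℕ}
    {u : ℕ → ℝ} (hu : InscribedIn 0 L m u) : collapse (vertexList γ m u) = vertexList γ m u := by
  unfold collapse
  apply @List.destutter_of_isChain _ _ (Classical.decRel _)
  rw [List.isChain_iff_getElem]
  intro i hi
  simp only [vertexList, List.length_map, List.length_range] at hi
  simp only [vertexList, List.getElem_map, List.getElem_range]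
  intro h
  have := hinj (hu.2 i (by omega)) (hu.2 (i + 1) (by omega)) h
  have := hu.1 i (by omega)
  linarith

lemma sc_tc_upper (hS : ScS X Y e) (hC : ScC (fun t => X (p t)) (fun t => Y (p t)) L t0)
    (hinj : Set.InjOn p (Set.Icc 0 L))
    {s t : ℝ} {τ τb : F} (hs : 0 < s) (ht : t < L) (hst : s ≠ t0) (htt : t ≠ t0)
    (hτ : τ ≠ 0) (hτb : τb ≠ 0) (hd : HasDerivAt p τ s) (hd' : HasDerivAt p τb t) :
    arcTC p s t ≤ ENNReal.ofReal (scTan e t0 t τb - scTan e t0 s τ) := by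
  refine iSup_le fun m => iSup_le fun u => iSup_le fun hu => ?_
  have hu0 : InscribedIn 0 L m u :=
    ⟨hu.1, fun i hi => ⟨by linarith [(hu.2 i hi).1], by linarith [(hu.2 i hi).2]⟩⟩
  rw [polyTC, sc_collapse_id hinj hu0]
  cases m with
  | zero => simp [sc_vertex_zero, turnSum]
  | succ m =>
    apply ENNReal.ofReal_le_ofReal
    have h1 := sc_turn_poly hS hC (scTan e t0 t τb) m u hu0 (sc_le_tan hS hC ht htt hτb hd'
      (hu0.2 m (by omega)).1 (hu.1 m (by omega)) (hu.2 (m + 1) le_rfl).2)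
    have h2 := sc_tan_le hS hC hs hst hτ hd (hu.2 0 (by omega)).1 (hu.1 0 (by omega))
      (hu0.2 1 (by omega)).2
    simp only [zero_add] at h2
    linarith

lemma sc_tan_mono (hS : ScS X Y e) (hC : ScC (fun t => X (p t)) (fun t => Y (p t)) L t0)
    {s t : ℝ} {τ τb : F} (hs : 0 < s) (hlt : s < t) (ht : t < L) (hst : s ≠ t0) (htt : t ≠ t0)
    (hτ : τ ≠ 0) (hτb : τb ≠ 0) (hd : HasDerivAt p τ s) (hd' : HasDerivAt p τb t) :
    scTan e t0 s τ ≤ scTan e t0 t τb :=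
  (sc_tan_le hS hC hs hst hτ hd le_rfl hlt ht.le).trans
    (sc_le_tan hS hC ht htt hτb hd' hs.le hlt le_rfl)

lemma sc_turnSum_nonneg : ∀ l : List F, 0 ≤ turnSum l
  | a :: b :: c :: l => by
    simp only [turnSum]
    exact add_nonneg (angle_nonneg _ _) (sc_turnSum_nonneg (b :: c :: l))
  | [] => le_rfl
  | [_] => le_rfl
  | [_, _] => le_rfl

lemma sc_quad (A B C D : F) (h1 : A ≠ B) (h2 : C ≠ D) :
    angle (B - A) (D - C) ≤ turnSum (collapse [A, B, C, D]) := by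
  unfold collapse
  by_cases h : B = C
  · subst h
    simp [List.destutter, List.destutter', h1, h2, turnSum]
  · simp only [List.destutter, List.destutter', ne_eq, h1, h2, h, not_false_eq_true, if_true,
      turnSum]
    have := angle_le_angle_add_angle (B - A) (C - B) (D - C)
    linarith

lemma sc_tc_lower {γ : ℝ → F} {s t : ℝ} {τ τb : F} (hst : s < t)
    (hτ : τ ≠ 0) (hτb : τb ≠ 0) (hd : HasDerivAt γ τ s) (hd' : HasDerivAt γ τb t) :
    ENNReal.ofReal (angle τ τb) ≤ arcTC γ s t := by
  have hR := sc_right hd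
  have hL := sc_left hd'
  have hlim : Tendsto (fun h : ℝ => angle (γ (s + h) - γ s) (γ t - γ (t - h))) (𝓝[>] 0)
      (𝓝 (angle τ τb)) := by
    have h1 := (continuousAt_angle (x := (τ, τb)) hτ hτb).tendsto.comp (hR.prodMk_nhds hL)
    refine h1.congr' ?_
    filter_upwards [self_mem_nhdsWithin] with h hh
    simp only [Function.comp]
    rw [angle_smul_right_of_pos _ _ (inv_pos.2 hh), angle_smul_left_of_pos _ _ (inv_pos.2 hh)]
  refine le_of_tendsto (ENNReal.continuous_ofReal.continuousAt.tendsto.comp hlim) ?_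
  filter_upwards [hR.eventually_ne hτ, hL.eventually_ne hτb,
    Ioo_mem_nhdsGT (show (0:ℝ) < (t - s) / 2 by linarith)] with h h1 h2 h3
  simp only [Function.comp]
  have hin : InscribedIn s t 3 (fun i => if i = 0 then s else if i = 1 then s + h else
      if i = 2 then t - h else t) := by
    refine ⟨fun i hi => ?_, fun i hi => ?_⟩
    · interval_cases i <;> simp <;> linarith [h3.1, h3.2]
    · interval_cases i <;> simp <;> first | (constructor <;> linarith [h3.1, h3.2]) | linarith [h3.1, h3.2]
  refine le_trans ?_ (le_iSup_of_le 3 (le_iSup_of_le _ (le_iSup_of_le hin le_rfl)))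
  apply ENNReal.ofReal_le_ofReal
  rw [polyTC]
  have hv : vertexList γ 3 (fun i => if i = 0 then s else if i = 1 then s + h else
      if i = 2 then t - h else t) = [γ s, γ (s + h), γ (t - h), γ t] := by
    simp [vertexList, List.range_succ]
  rw [hv]
  apply sc_quad
  · intro h0; apply h1; simp [h0]
  · intro h0; apply h2; simp [h0]

end tangent

section vec
variable {F : Type*} [NormedAddCommGroup F] [InnerProductSpace ℝ F]

open InnerProductGeometry

lemma sc_cos_le {T x u : F} (hT : ‖T‖ = 1) (hx : ‖x‖ = 1) {α η : ℝ}
    (h1 : angle T u ≤ α) (h2 : angle u x ≤ η) (h3 : α + η ≤ Real.pi) :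
    Real.cos (α + η) ≤ ⟪T, x⟫ := by
  have h := cos_angle T x
  rw [hT, hx] at h
  simp only [mul_one, div_one] at h
  rw [← h]
  have := angle_le_angle_add_angle T u x
  exact Real.cos_le_cos_of_nonneg_of_le_pi (angle_nonneg _ _) h3 (by linarith)

lemma sc_angle_eq_of_inner {T u : F} (hT : ‖T‖ = 1) (hu : ‖u‖ = 1) {α : ℝ} (h0 : 0 ≤ α)
    (h1 : α ≤ Real.pi) (h : ⟪T, u⟫ = Real.cos α) : angle T u = α := by
  rw [angle, hT, hu, h]
  simp [Real.arccos_cos h0 h1]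

lemma sc_vec {u w : F} (hu : ‖u‖ = 1) (hw : ‖w‖ = 1) {α β : ℝ} (hα : 0 ≤ α) (hα' : α ≤ Real.pi)
    (hβ : 0 ≤ β) (hβ' : β ≤ Real.pi) (h : angle u w ≤ α + β) :
    ∃ T : F, ‖T‖ ≤ 1 ∧ ∀ x : F, ‖x‖ = 1 → ∀ η : ℝ,
      (angle u x ≤ η → α + η ≤ Real.pi → Real.cos (α + η) ≤ ⟪T, x⟫) ∧
      (angle w x ≤ η → β + η ≤ Real.pi → Real.cos (β + η) ≤ ⟪T, x⟫) := by
  have hw0 : w ≠ 0 := by rintro rfl; simp at hw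
  have hu0 : u ≠ 0 := by rintro rfl; simp at hu
  by_cases hd : angle u w ≤ α
  · refine ⟨w, hw.le, fun x hx η => ⟨fun h1 h2 => ?_, fun h1 h2 => ?_⟩⟩
    · exact sc_cos_le hw hx (by rwa [angle_comm]) h1 h2
    · exact sc_cos_le hw hx (by rw [angle_self hw0]; exact hβ) h1 h2
  push Not at hd
  set δ := angle u w with hδ
  have hδpi : δ ≤ Real.pi := angle_le_pi u w
  have hcos : ⟪u, w⟫ = Real.cos δ := by
    rw [hδ, cos_angle, hu, hw]; simp
  rcases hδpi.eq_or_lt with hp | hp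
  · refine ⟨Real.cos α • u, ?_, fun x hx η => ⟨fun h1 h2 => ?_, fun h1 h2 => ?_⟩⟩
    · rw [norm_smul, hu, mul_one]
      exact Real.abs_cos_le_one α
    · have hin : ⟪u, x⟫ = Real.cos (angle u x) := by rw [cos_angle, hu, hx]; simp
      rw [inner_smul_left, hin, conj_trivial]
      have h4 := Real.cos_le_cos_of_nonneg_of_le_pi (add_nonneg hα (angle_nonneg u x)) h2
        (by linarith)
      rw [Real.cos_add α (angle u x)] at h4
      have h5 := mul_nonneg (Real.sin_nonneg_of_nonneg_of_le_pi hα hα') (sin_angle_nonneg u x)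
      linarith
    · have hwu : w = -u := by
        have h3 : ‖w + u‖ ^ 2 = 0 := by
          rw [norm_add_sq_real, hu, hw, real_inner_comm, hcos, hp, Real.cos_pi]
          norm_num
        have h4 : w + u = 0 := by simpa using h3
        exact eq_neg_of_add_eq_zero_left h4
      have hin : ⟪w, x⟫ = Real.cos (angle w x) := by rw [cos_angle, hw, hx]; simp
      have hin2 : ⟪u, x⟫ = - Real.cos (angle w x) := by
        rw [← hin, hwu, inner_neg_left, neg_neg]
      rw [inner_smul_left, hin2, conj_trivial]
      have hα'' : 0 ≤ Real.pi - α := by linarith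
      have h4 := Real.cos_le_cos_of_nonneg_of_le_pi (add_nonneg hα'' (angle_nonneg w x)) h2
        (by linarith)
      rw [Real.cos_add (Real.pi - α) (angle w x), Real.cos_pi_sub, Real.sin_pi_sub] at h4
      have h5 := mul_nonneg (Real.sin_nonneg_of_nonneg_of_le_pi hα hα') (sin_angle_nonneg w x)
      linarith
  · have hs : 0 < Real.sin δ := Real.sin_pos_of_pos_of_lt_pi (by linarith) hp
    set T : F := (Real.sin δ)⁻¹ • (Real.sin (δ - α) • u + Real.sin α • w) with hTdef
    have hTu : ⟪T, u⟫ = Real.cos α := by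
      rw [hTdef, inner_smul_left, inner_add_left, inner_smul_left, inner_smul_left,
        real_inner_self_eq_norm_sq, hu, real_inner_comm, hcos]
      simp only [conj_trivial]
      rw [Real.sin_sub]
      field_simp
      ring
    have hTw : ⟪T, w⟫ = Real.cos (δ - α) := by
      rw [hTdef, inner_smul_left, inner_add_left, inner_smul_left, inner_smul_left,
        real_inner_self_eq_norm_sq, hw, hcos]
      simp only [conj_trivial]
      rw [Real.sin_sub, Real.cos_sub]
      have := Real.sin_sq_add_cos_sq δ
      field_simp
      linear_combination (Real.sin α) * (-this)
    have hTn : ‖T‖ = 1 := by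
      have h1 : ⟪T, T⟫ = 1 := by
        conv_lhs => rw [hTdef]
        rw [inner_smul_left, inner_add_left, inner_smul_left, inner_smul_left,
          real_inner_comm, hTu, real_inner_comm, hTw]
        simp only [conj_trivial]
        rw [Real.sin_sub, Real.cos_sub]
        have := Real.sin_sq_add_cos_sq α
        field_simp
        linear_combination (Real.sin δ) * this
      rw [real_inner_self_eq_norm_sq] at h1
      have := norm_nonneg T
      nlinarith
    refine ⟨T, hTn.le, fun x hx η => ⟨fun h1 h2 => ?_, fun h1 h2 => ?_⟩⟩
    · exact sc_cos_le hTn hx (sc_angle_eq_of_inner hTn hu hα hα' hTu).le h1 h2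
    · refine sc_cos_le hTn hx ?_ h1 h2
      rw [sc_angle_eq_of_inner hTn hw (by linarith) (by linarith) hTw]
      linarith

end vec

section final
variable {E : Type*} [NormedAddCommGroup E] [InnerProductSpace ℝ E]

open InnerProductGeometry

lemma sc_exists_good {P : ℝ → Prop} (h : ∀ᵐ t : ℝ, P t) {a b : ℝ} (hab : a < b) :
    ∃ t ∈ Set.Ioo a b, P t := by
  by_contra hc
  push Not at hc
  have h1 : Set.Ioo a b ⊆ {t | ¬ P t} := fun t ht => hc t ht
  have h2 : volume (Set.Ioo a b) = 0 := measure_mono_null h1 h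
  rw [Real.volume_Ioo] at h2
  simp at h2
  linarith

lemma sc_inner_close {γ : ℝ → E} {L : ℝ} (hl : LipschitzOnWith 1 γ (Set.Icc 0 L)) {T : E}
    (hT : ‖T‖ ≤ 1) {s t : ℝ} (hs : 0 ≤ s) (hst : s ≤ t) (ht : t ≤ L) :
    |⟪T, γ t⟫ - ⟪T, γ s⟫| ≤ t - s := by
  have h := (sc_inner_lip hl T).dist_le_mul t ⟨by linarith, ht⟩ s ⟨hs, by linarith⟩
  rw [Real.dist_eq, Real.dist_eq, coe_nnnorm, abs_of_nonneg (show 0 ≤ t - s by linarith)] at h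
  nlinarith

lemma sc_mono_piece [FiniteDimensional ℝ E] {F : Type*} [NormedAddCommGroup F]
    [InnerProductSpace ℝ F] [FiniteDimensional ℝ F] {γ : ℝ → E} {p : ℝ → F} {L : ℝ}
    (hl : LipschitzOnWith 1 γ (Set.Icc 0 L)) (hp : LipschitzOnWith 1 p (Set.Icc 0 L)) {T : E} {e : F}
    {a b : ℝ} (ha : 0 ≤ a) (hab : a ≤ b) (hb : b ≤ L)
    (h : ∀ᵐ t : ℝ, t ∈ Set.Ioo a b → DifferentiableAt ℝ γ t ∧ DifferentiableAt ℝ p t ∧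
      ⟪e, deriv p t⟫ ≤ ⟪T, deriv γ t⟫) :
    ⟪e, p b⟫ - ⟪e, p a⟫ ≤ ⟪T, γ b⟫ - ⟪T, γ a⟫ := by
  have hsub : Set.Icc a b ⊆ Set.Icc 0 L := Set.Icc_subset_Icc ha hb
  have h1 := sc_mono_of_ae hab (((sc_inner_lip hl T).mono hsub).sub ((sc_inner_lip hp e).mono hsub))
    (by
      filter_upwards [h] with t ht hI
      obtain ⟨h1, h2, h3⟩ := ht hI
      have := ((sc_deriv_inner T h1).sub (sc_deriv_inner e h2)).deriv
      change 0 ≤ deriv ((fun t => ⟪T, γ t⟫) - fun t => ⟪e, p t⟫) t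
      rw [this]
      linarith)
  linarith

lemma sc_main [FiniteDimensional ℝ E] {F : Type*} [NormedAddCommGroup F]
    [InnerProductSpace ℝ F] [FiniteDimensional ℝ F] {γ : ℝ → E} {p : ℝ → F} {L t0 : ℝ}
    {X Y : F →ₗ[ℝ] ℝ} {e : F} (hS : ScS X Y e)
    (hC : ScC (fun t => X (p t)) (fun t => Y (p t)) L t0)
    (hinj : Set.InjOn p (Set.Icc 0 L))
    (harcb : ∀ a b : ℝ, 0 ≤ a → a ≤ b → b ≤ L → arcLen p a b = ENNReal.ofReal (b - a))
    (harc : ∀ a b : ℝ, 0 ≤ a → a ≤ b → b ≤ L → arcLen γ a b = ENNReal.ofReal (b - a))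
    (hcomp : ∀ a b : ℝ, 0 ≤ a → a ≤ b → b ≤ L → arcTC γ a b ≤ arcTC p a b) :
    ⟪e, p L - p 0⟫ ≤ ‖γ L - γ 0‖ := by
  have h0 := hC.ht0
  have hL : 0 ≤ L := by linarith [h0.1, h0.2]
  have hlb := sc_lip harcb
  have hl := sc_lip harc
  have hae : ∀ᵐ t : ℝ, t ∈ Set.Ioo 0 L → t ≠ t0 ∧ (DifferentiableAt ℝ γ t ∧ ‖deriv γ t‖ = 1) ∧
      (DifferentiableAt ℝ p t ∧ ‖deriv p t‖ = 1) := by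
    have h2 : ∀ᵐ t : ℝ, t ≠ t0 := by simp [ae_iff]
    filter_upwards [sc_ae_unit hL harc, sc_ae_unit hL harcb, h2] with t h1 h2 h3 h4
    exact ⟨h3, h1 h4, h2 h4⟩
  -- the angle comparison
  have key : ∀ s t : ℝ, 0 < s → s < t → t < L →
      (s ≠ t0 ∧ (DifferentiableAt ℝ γ s ∧ ‖deriv γ s‖ = 1) ∧
        (DifferentiableAt ℝ p s ∧ ‖deriv p s‖ = 1)) →
      (t ≠ t0 ∧ (DifferentiableAt ℝ γ t ∧ ‖deriv γ t‖ = 1) ∧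
        (DifferentiableAt ℝ p t ∧ ‖deriv p t‖ = 1)) →
      angle (deriv γ s) (deriv γ t) ≤ scTan e t0 t (deriv p t) - scTan e t0 s (deriv p s) := by
    rintro s t hs hst ht ⟨s1, ⟨s2, s3⟩, s4, s5⟩ ⟨t1, ⟨t2, t3⟩, t4, t5⟩
    have nz' : ∀ {v : E}, ‖v‖ = 1 → v ≠ 0 := by
      intro v hv h
      simp [h] at hv
    have nz2 : ∀ {v : F}, ‖v‖ = 1 → v ≠ 0 := by
      intro v hv h
      simp [h] at hv
    have a1 := sc_tc_lower hst (nz' s3) (nz' t3) s2.hasDerivAt t2.hasDerivAt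
    have a2 := sc_tc_upper hS hC hinj hs ht s1 t1 (nz2 s5) (nz2 t5) s4.hasDerivAt t4.hasDerivAt
    have a3 := sc_tan_mono hS hC hs hst ht s1 t1 (nz2 s5) (nz2 t5) s4.hasDerivAt t4.hasDerivAt
    have a4 := a1.trans ((hcomp s t hs.le hst.le ht.le).trans a2)
    exact (ENNReal.ofReal_le_ofReal_iff (by linarith)).1 a4
  have hcosp : ∀ t, ‖deriv p t‖ = 1 → ⟪e, deriv p t⟫ = Real.cos (angle e (deriv p t)) := by
    intro t ht
    rw [cos_angle, hS.norm_e, ht]; simp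
  apply le_of_forall_pos_le_add
  intro ε hε
  obtain ⟨s, hs, gs⟩ := sc_exists_good hae (a := max 0 (t0 - ε / 4)) (b := t0)
    (max_lt h0.1 (by linarith))
  obtain ⟨t, ht, gt⟩ := sc_exists_good hae (a := t0) (b := min L (t0 + ε / 4))
    (lt_min h0.2 (by linarith))
  have hs0 : 0 < s := lt_of_le_of_lt (le_max_left _ _) hs.1
  have hs1 : t0 - ε / 4 < s := lt_of_le_of_lt (le_max_right _ _) hs.1
  have hs2 : s < t0 := hs.2
  have htL : t < L := lt_of_lt_of_le ht.2 (min_le_left _ _)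
  have ht1 : t < t0 + ε / 4 := lt_of_lt_of_le ht.2 (min_le_right _ _)
  have ht2 : t0 < t := ht.1
  have gs := gs ⟨hs0, by linarith⟩
  have gt := gt ⟨by linarith, htL⟩
  have hst := key s t hs0 (by linarith) htL gs gt
  have tanS : ∀ r < t0, scTan e t0 r (deriv p r) = - angle e (deriv p r) := by
    intro r hr
    rw [scTan, if_neg (by linarith)]
  have tanT : ∀ r, t0 < r → scTan e t0 r (deriv p r) = angle e (deriv p r) := by
    intro r hr
    rw [scTan, if_pos hr]
  rw [tanS s hs2, tanT t ht2] at hst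
  obtain ⟨T, hT, hT'⟩ := sc_vec (u := deriv γ s) (w := deriv γ t) gs.2.1.2 gt.2.1.2
    (angle_nonneg e (deriv p s)) (angle_le_pi _ _) (angle_nonneg e (deriv p t)) (angle_le_pi _ _)
    (by linarith)
  have c1 : ⟪e, p s⟫ - ⟪e, p 0⟫ ≤ ⟪T, γ s⟫ - ⟪T, γ 0⟫ := by
    refine sc_mono_piece hl hlb le_rfl hs0.le (by linarith) ?_
    filter_upwards [hae] with r hr hI
    have gr := hr ⟨hI.1, by linarith [hI.2]⟩
    refine ⟨gr.2.1.1, gr.2.2.1, ?_⟩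
    have k := key r s hI.1 hI.2 (by linarith) gr gs
    rw [tanS s hs2, tanS r (by linarith [hI.2]), angle_comm] at k
    have := (hT' (deriv γ r) gr.2.1.2 (angle e (deriv p r) - angle e (deriv p s))).1 (by linarith)
      (by linarith [angle_le_pi e (deriv p r)])
    rw [add_sub_cancel] at this
    rw [hcosp r gr.2.2.2]
    exact this
  have c2 : ⟪e, p L⟫ - ⟪e, p t⟫ ≤ ⟪T, γ L⟫ - ⟪T, γ t⟫ := by
    refine sc_mono_piece hl hlb (by linarith) htL.le le_rfl ?_
    filter_upwards [hae] with r hr hI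
    have gr := hr ⟨by linarith [hI.1], hI.2⟩
    refine ⟨gr.2.1.1, gr.2.2.1, ?_⟩
    have k := key t r (by linarith) hI.1 hI.2 gt gr
    rw [tanT t ht2, tanT r (by linarith [hI.1])] at k
    have := (hT' (deriv γ r) gr.2.1.2 (angle e (deriv p r) - angle e (deriv p t))).2 (by linarith)
      (by linarith [angle_le_pi e (deriv p r)])
    rw [add_sub_cancel] at this
    rw [hcosp r gr.2.2.2]
    exact this
  have m1 := (abs_le.1 (sc_inner_close hl hT hs0.le (show s ≤ t by linarith) htL.le)).1
  have m2 := (abs_le.1 (sc_inner_close hlb hS.norm_e.le hs0.le (show s ≤ t by linarith) htL.le)).2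
  have m3 : ⟪T, γ L - γ 0⟫ ≤ ‖γ L - γ 0‖ := by
    have := real_inner_le_norm T (γ L - γ 0)
    have := norm_nonneg (γ L - γ 0)
    nlinarith
  rw [inner_sub_right] at m3 ⊢
  linarith

end final

/-- Schur's comparison theorem: let `γb : [0,L] → ℝ²` be an injective arc
parametrized by arclength such that its image together with the segment joining its
endpoints is the frontier of a compact convex set, and let `γ : [0,L] → ℝᵈ` be an arc
parametrized by arclength with nowhere more curvature than `γb`.  Then the endpoints of
`γ` are at least as far apart as those of `γb`. -/
theorem schur_comparison (d : ℕ) (L : ℝ) (hL : 0 ≤ L)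
    (γb : ℝ → EuclideanSpace ℝ (Fin 2)) (γ : ℝ → EuclideanSpace ℝ (Fin d))
    (hγbc : ContinuousOn γb (Set.Icc 0 L)) (hγc : ContinuousOn γ (Set.Icc 0 L))
    (hinj : Set.InjOn γb (Set.Icc 0 L))
    (harcb : ∀ a b : ℝ, 0 ≤ a → a ≤ b → b ≤ L → arcLen γb a b = ENNReal.ofReal (b - a))
    (harc : ∀ a b : ℝ, 0 ≤ a → a ≤ b → b ≤ L → arcLen γ a b = ENNReal.ofReal (b - a))
    (hconv : ∃ C : Set (EuclideanSpace ℝ (Fin 2)), IsCompact C ∧ Convex ℝ C ∧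
      frontier C = γb '' Set.Icc 0 L ∪ segment ℝ (γb L) (γb 0))
    (hcomp : ∀ a b : ℝ, 0 ≤ a → a ≤ b → b ≤ L → arcTC γ a b ≤ arcTC γb a b) :
    ‖γb L - γb 0‖ ≤ ‖γ L - γ 0‖ := by
  rcases hL.eq_or_lt with rfl | hLpos
  · simp
  obtain ⟨C, hCc, hCv, hfr⟩ := hconv
  obtain ⟨σ, hσ, hD⟩ := sc_orient hCv hCc.isClosed hγbc hinj (fun t ht => by
    rw [hfr]; exact Or.inl ⟨t, ht, rfl⟩)
  have hσ2 : σ * σ = 1 := by rcases hσ with rfl | rfl <;> norm_num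
  have hne : γb L - γb 0 ≠ 0 := by
    intro h
    have := hinj ⟨hL, le_rfl⟩ ⟨le_rfl, hL⟩ (sub_eq_zero.1 h)
    linarith
  have hr := norm_pos_iff.2 hne
  set r := ‖γb L - γb 0‖ with hrdef
  set e : EuclideanSpace ℝ (Fin 2) := r⁻¹ • (γb L - γb 0) with he
  have hen : ‖e‖ = 1 := by
    rw [he, norm_smul, norm_inv, norm_norm, ← hrdef]
    field_simp
  have he2 : e 0 * e 0 + e 1 * e 1 = 1 := by
    have := EuclideanSpace.real_norm_sq_eq e
    rw [hen] at this
    simp [Fin.sum_univ_two] at this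
    linarith
  have hw : γb L - γb 0 = r • e := by
    rw [he, smul_smul, mul_inv_cancel₀ hr.ne', one_smul]
  clear_value e
  set n : EuclideanSpace ℝ (Fin 2) := !₂[-(σ * e 1), σ * e 0] with hn
  set X : EuclideanSpace ℝ (Fin 2) →ₗ[ℝ] ℝ := innerₛₗ ℝ e with hX
  set Y : EuclideanSpace ℝ (Fin 2) →ₗ[ℝ] ℝ := innerₛₗ ℝ n with hY
  have hXv : ∀ v, X v = e 0 * v 0 + e 1 * v 1 := by
    intro v
    simp [hX, PiLp.inner_apply, Fin.sum_univ_two]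
    ring
  have hYv : ∀ v, Y v = σ * (e 0 * v 1 - e 1 * v 0) := by
    intro v
    simp [hY, hn, PiLp.inner_apply, Fin.sum_univ_two]
    ring
  have hS : ScS X Y e := by
    refine ⟨fun v w => ?_, ?_, ?_⟩
    · rw [hXv, hXv, hYv, hYv]
      simp [PiLp.inner_apply, Fin.sum_univ_two]
      linear_combination (-(e 0 * v 1 - e 1 * v 0) * (e 0 * w 1 - e 1 * w 0)) * hσ2
        - (v 0 * w 0 + v 1 * w 1) * he2
    · rw [hXv]; exact he2
    · rw [hYv]; ring
  have hXc : ContinuousOn (fun t => X (γb t)) (Set.Icc 0 L) :=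
    ((innerSL ℝ e).continuous).comp_continuousOn hγbc
  have hYc : ContinuousOn (fun t => Y (γb t)) (Set.Icc 0 L) :=
    ((innerSL ℝ n).continuous).comp_continuousOn hγbc
  have hinj' : ∀ s ∈ Set.Icc 0 L, ∀ t ∈ Set.Icc 0 L, X (γb s) = X (γb t) → Y (γb s) = Y (γb t) →
      s = t := by
    intro s hs t ht h1 h2
    apply hinj hs ht
    have h3 := hS.nsq (γb s - γb t)
    rw [map_sub, map_sub, h1, h2] at h3
    simp at h3
    exact sub_eq_zero.1 h3
  have hYL : Y (γb L) - Y (γb 0) = 0 := by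
    rw [← map_sub, hw, map_smul, hS.Ye, smul_zero]
  have hXL : X (γb L) - X (γb 0) = r := by
    rw [← map_sub, hw, map_smul, hS.Xe, smul_eq_mul, mul_one]
  have hD' : ∀ a b c, 0 ≤ a → a < b → b < c → c ≤ L →
      0 ≤ (X (γb b) - X (γb a)) * (Y (γb c) - Y (γb a))
        - (Y (γb b) - Y (γb a)) * (X (γb c) - X (γb a)) := by
    intro a b c h1 h2 h3 h4
    have := hD a b c h1 h2 h3 h4
    simp only [← map_sub]
    rw [hXv, hYv, hXv, hYv]
    have h5 : (σ * scDet (γb b - γb a) (γb c - γb a)) * (e 0 * e 0 + e 1 * e 1) =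
        (e 0 * (γb b - γb a) 0 + e 1 * (γb b - γb a) 1) *
          (σ * (e 0 * (γb c - γb a) 1 - e 1 * (γb c - γb a) 0)) -
        σ * (e 0 * (γb b - γb a) 1 - e 1 * (γb b - γb a) 0) *
          (e 0 * (γb c - γb a) 0 + e 1 * (γb c - γb a) 1) := by
      unfold scDet
      ring
    rw [← h5, he2, mul_one]
    exact this
  have hYneg : ∀ t ∈ Set.Icc 0 L, Y (γb t) ≤ Y (γb 0) := by
    intro t ht
    rcases ht.1.eq_or_lt with h0 | h0
    · rw [← h0]
    rcases ht.2.eq_or_lt with h1 | h1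
    · rw [h1]; linarith
    have := hD' 0 t L le_rfl h0 h1 le_rfl
    rw [hYL, hXL] at this
    by_contra hc
    push Not at hc
    nlinarith
  obtain ⟨t0, ht0, hmin⟩ : ∃ t0 ∈ Set.Ioo 0 L, ∀ t ∈ Set.Icc 0 L, Y (γb t0) ≤ Y (γb t) := by
    obtain ⟨t1, ht1, hm⟩ := isCompact_Icc.exists_isMinOn (Set.nonempty_Icc.2 hL) hYc
    by_cases hlt : Y (γb t1) < Y (γb 0)
    · refine ⟨t1, ⟨lt_of_le_of_ne ht1.1 ?_, lt_of_le_of_ne ht1.2 ?_⟩, fun t ht => hm ht⟩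
      · rintro rfl; exact lt_irrefl _ hlt
      · rintro rfl; linarith
    · refine ⟨L / 2, ⟨by linarith, by linarith⟩, fun t ht => ?_⟩
      have h1 := hYneg (L / 2) ⟨by linarith, by linarith⟩
      have h2 : Y (γb t1) ≤ Y (γb t) := hm ht
      linarith
  have hC : ScC (fun t => X (γb t)) (fun t => Y (γb t)) L t0 := by
    refine ⟨hXc, hYc.sub continuousOn_const, ?_, ?_, ?_, ?_, ?_, ht0, ?_⟩
    · intro s hs t ht h1 h2
      exact hinj' s hs t ht h1 (by linarith)
    · intro a b c h1 h2 h3 h4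
      simpa using hD' a b c h1 h2 h3 h4
    · simp
    · exact hYL
    · linarith
    · intro t ht
      simpa using hmin t ht
  have := sc_main hS hC hinj harcb harc hcomp
  rwa [hw, inner_smul_right, real_inner_self_eq_norm_sq, hen, one_pow, mul_one] at this
end

section
/- (Chakerian's packing theorem) Let γ be a continuous curve in ℝ^d whose image is contained in the closed unit ball. If γ is an arc, then Len(γ) ≤ 2 + TC*(γ); if γ is a closed curve (loop), then Len(γ) ≤ TC*(γ). Here TC* denotes the euclidean total curvature. -/
open Set Filter MeasureTheory
open scoped ENNReal NNReal RealInnerProductSpace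

section Helpers

variable {E : Type*} [NormedAddCommGroup E]

lemma lenList_concat (l : List E) (x y : E) :
    lenList (l ++ [x, y]) = lenList (l ++ [x]) + ‖y - x‖ := by
  induction l with
  | nil => simp [lenList]
  | cons a t ih =>
    cases t with
    | nil => simp [lenList]
    | cons b t =>
      simp only [List.cons_append, lenList] at ih ⊢
      rw [ih]; ring

lemma destutter'_head {R : E → E → Prop} [DecidableRel R] (l : List E) (a : E) :
    ∃ r, List.destutter' R a l = a :: r := by
  induction l generalizing a with
  | nil => exact ⟨[], rfl⟩
  | cons b t ih =>
    rw [List.destutter'_cons]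
    split_ifs
    · exact ⟨_, rfl⟩
    · exact ih a

lemma lenList_destutter' [DecidableRel (fun x y : E => x ≠ y)] (l s : List E) (a : E) :
    lenList (List.destutter' (fun x y : E => x ≠ y) a l ++ s) = lenList (a :: l ++ s) := by
  induction l generalizing a with
  | nil => rfl
  | cons b t ih =>
    rw [List.destutter'_cons]
    split_ifs with h
    · have ihb := ih b
      obtain ⟨r, hr⟩ := destutter'_head (R := fun x y : E => x ≠ y) t b
      rw [hr] at ihb ⊢
      simp only [List.cons_append, lenList] at ihb ⊢
      rw [ihb]
    · have hab : a = b := by simpa using h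
      subst hab
      rw [ih a]
      simp [lenList]

lemma collapse_cons (a : E) (l : List E) : ∃ r, collapse (a :: l) = a :: r := by
  exact @destutter'_head E _ (fun x y => x ≠ y) (Classical.decRel _) l a

lemma lenList_collapse (l s : List E) : lenList (collapse l ++ s) = lenList (l ++ s) := by
  unfold collapse
  cases l with
  | nil => rfl
  | cons a t =>
    rw [List.destutter_cons']
    exact @lenList_destutter' E _ (Classical.decRel _) t s a

lemma mem_collapse {l : List E} {x : E} (h : x ∈ collapse l) : x ∈ l :=
  (@List.destutter_sublist E (fun x y => x ≠ y) (Classical.decRel _) l).subset h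

lemma mem_cyclicCollapse {l : List E} {x : E} (h : x ∈ cyclicCollapse l) : x ∈ l := by
  unfold cyclicCollapse at h
  split_ifs at h
  · exact mem_collapse (List.mem_of_mem_dropLast h)
  · exact mem_collapse h

lemma lenList_cyclicCollapse (a : E) (t : List E) :
    ∃ r, cyclicCollapse (a :: t) = a :: r ∧
      lenList (a :: r ++ [a]) = lenList (a :: t ++ [a]) := by
  obtain ⟨r, hr⟩ := collapse_cons a t
  have hlen := lenList_collapse (a :: t) [a]
  rw [hr] at hlen
  unfold cyclicCollapse
  rw [hr]
  split_ifs with h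
  · obtain ⟨h1, h2⟩ := h
    rcases List.eq_nil_or_concat r with rfl | ⟨q, z, rfl⟩
    · simp at h1
    · have hz : z = a := by
        have : (a :: (q ++ [z])) = (a :: q) ++ [z] := rfl
        rw [List.concat_eq_append, this, List.getLast?_append] at h2
        simpa using h2
      subst hz
      refine ⟨q, ?_, ?_⟩
      · rw [List.concat_eq_append]
        have : (z :: (q ++ [z])) = (z :: q) ++ [z] := rfl
        rw [this, List.dropLast_concat]
      · rw [← hlen, List.concat_eq_append]
        have := lenList_concat (z :: q) z z
        simp at this ⊢
        rw [this]
  · exact ⟨r, rfl, hlen⟩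

variable [InnerProductSpace ℝ E]

/-- unit edge vector -/
noncomputable def uEdge (a b : E) : E := ‖b - a‖⁻¹ • (b - a)

lemma norm_uEdge_le (a b : E) : ‖uEdge a b‖ ≤ 1 := by
  unfold uEdge
  rw [norm_smul, norm_inv, norm_norm]
  exact inv_mul_le_one

lemma edge_inner (a b : E) : ‖b - a‖ + inner ℝ a (uEdge a b) = inner ℝ b (uEdge a b) := by
  have : inner ℝ (b - a) (uEdge a b) = ‖b - a‖ := by
    unfold uEdge
    rw [inner_smul_right, real_inner_self_eq_norm_sq]
    by_cases h : ‖b - a‖ = 0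
    · simp [h]
    · field_simp
  rw [inner_sub_left] at this
  linarith

lemma inner_turn {b : E} (hb : ‖b‖ ≤ 1) (v w : E) : inner ℝ b v ≤ inner ℝ b w + ‖w - v‖ := by
  have h1 : inner ℝ b (v - w) ≤ ‖b‖ * ‖v - w‖ := real_inner_le_norm _ _
  have h2 : ‖b‖ * ‖v - w‖ ≤ 1 * ‖v - w‖ := by gcongr
  rw [inner_sub_right] at h1
  rw [norm_sub_rev w v]
  linarith

lemma arc_list (l : List E) (a b : E) (h : ∀ x ∈ a :: b :: l, ‖x‖ ≤ 1) :
    lenList (a :: b :: l) + inner ℝ a (uEdge a b) ≤ 1 + starSum (a :: b :: l) := by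
  induction l generalizing a b with
  | nil =>
    have h1 := edge_inner a b
    have h2 : inner ℝ b (uEdge a b) ≤ ‖b‖ * ‖uEdge a b‖ := real_inner_le_norm _ _
    have h3 : ‖b‖ * ‖uEdge a b‖ ≤ 1 :=
      mul_le_one₀ (h b (by simp)) (norm_nonneg _) (norm_uEdge_le a b)
    simp only [lenList, starSum]
    linarith
  | cons c t ih =>
    have ihh := ih b c (fun x hx => h x (List.mem_cons_of_mem _ hx))
    have h1 := edge_inner a b
    have h2 := inner_turn (h b (by simp)) (uEdge a b) (uEdge b c)
    have e1 : lenList (a :: b :: c :: t) = ‖b - a‖ + lenList (b :: c :: t) := rfl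
    have e2 : starSum (a :: b :: c :: t)
      = ‖uEdge b c - uEdge a b‖ + starSum (b :: c :: t) := rfl
    linarith

lemma arc_bound (l : List E) (h : ∀ x ∈ l, ‖x‖ ≤ 1) : lenList l ≤ 2 + starSum l := by
  match l, h with
  | [], _ => simp [lenList, starSum]
  | [a], _ => simp [lenList, starSum]
  | a :: b :: t, h =>
    have h1 := arc_list t a b h
    have h2 : |inner ℝ a (uEdge a b)| ≤ ‖a‖ * ‖uEdge a b‖ := abs_real_inner_le_norm _ _
    have h3 : ‖a‖ * ‖uEdge a b‖ ≤ 1 :=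
      mul_le_one₀ (h a (by simp)) (norm_nonneg _) (norm_uEdge_le a b)
    have h4 := neg_abs_le (inner ℝ a (uEdge a b))
    linarith

lemma loop_list (x y : E) (hx : ‖x‖ ≤ 1) (l : List E) (a c : E) (r : List E)
    (hr : l ++ [x] = c :: r) (h : ∀ z ∈ l, ‖z‖ ≤ 1) :
    lenList (a :: l ++ [x]) + inner ℝ a (uEdge a c)
      ≤ inner ℝ x (uEdge x y) + starSum (a :: l ++ [x, y]) := by
  induction l generalizing a c r with
  | nil =>
    simp only [List.nil_append, List.cons.injEq] at hr
    obtain ⟨rfl, -⟩ := hr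
    have h1 := edge_inner a x
    have h2 := inner_turn hx (uEdge a x) (uEdge x y)
    have e1 : lenList ([a] ++ [x]) = ‖x - a‖ + 0 := rfl
    have e2 : starSum ([a] ++ [x, y]) = ‖uEdge x y - uEdge a x‖ + 0 := rfl
    linarith
  | cons b t ih =>
    simp only [List.cons_append, List.cons.injEq] at hr
    obtain ⟨rfl, -⟩ := hr
    have h1 := edge_inner a b
    have e1 : lenList (a :: (b :: t) ++ [x]) = ‖b - a‖ + lenList (b :: t ++ [x]) := rfl
    obtain ⟨d, q, hq, qq, hqq⟩ : ∃ d q, t ++ [x] = d :: q ∧ ∃ qq, t ++ [x, y] = d :: qq := by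
      cases t with
      | nil => exact ⟨x, [], rfl, [y], rfl⟩
      | cons d t => exact ⟨d, t ++ [x], rfl, t ++ [x, y], rfl⟩
    have ihh := ih b d q hq (fun z hz => h z (List.mem_cons_of_mem _ hz))
    have h2 := inner_turn (h b (by simp)) (uEdge a b) (uEdge b d)
    have e2 : starSum (a :: (b :: t) ++ [x, y])
        = ‖uEdge b d - uEdge a b‖ + starSum (b :: t ++ [x, y]) := by
      simp only [List.cons_append, hqq]
      rfl
    linarith

lemma loop_bound (a : E) (r : List E) (h : ∀ z ∈ a :: r, ‖z‖ ≤ 1) :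
    lenList (a :: r ++ [a]) ≤ starSum (a :: r ++ (a :: r).take 2) := by
  cases r with
  | nil => simp [lenList, starSum]
  | cons b t =>
    have := loop_list a b (h a (by simp)) (b :: t) a b (t ++ [a]) rfl
      (fun z hz => h z (List.mem_cons_of_mem _ hz))
    have e : (a :: b :: t).take 2 = [a, b] := rfl
    rw [e]
    linarith

lemma polyLen_eq (γ : ℝ → E) (m : ℕ) (u : ℕ → ℝ) :
    polyLen γ m u = lenList (vertexList γ m u) := by
  unfold polyLen vertexList
  induction m with
  | zero => simp [lenList]
  | succ m ih =>
    rw [Finset.sum_range_succ, ih, List.range_succ (n := m + 1), List.range_succ (n := m)]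
    simp only [List.map_append, List.map_cons, List.map_nil, List.append_assoc,
      List.cons_append, List.nil_append]
    rw [lenList_concat]

end Helpers

/-- Chakerian's packing theorem: a continuous curve in the closed unit
ball of `ℝᵈ` satisfies `Len γ ≤ 2 + TC* γ` if it is an arc, and `Len γ ≤ TC* γ` if it is
a closed curve. -/
theorem chakerian_packing (d : ℕ) :
    (∀ γ : ℝ → EuclideanSpace ℝ (Fin d), ContinuousOn γ (Set.Icc 0 1) →
      (∀ t ∈ Set.Icc (0 : ℝ) 1, ‖γ t‖ ≤ 1) →
      arcLen γ 0 1 ≤ 2 + arcTCStar γ 0 1) ∧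
    (∀ γ : AddCircle (1 : ℝ) → EuclideanSpace ℝ (Fin d), Continuous γ →
      (∀ t, ‖γ t‖ ≤ 1) →
      loopLen γ ≤ loopTCStar γ) := by
  constructor
  · intro γ _ hb
    unfold arcLen
    refine iSup_le fun m => iSup_le fun u => iSup_le fun hu => ?_
    have key : polyLen γ m u ≤ 2 + polyTCStar γ m u := by
      have h1 := lenList_collapse (vertexList γ m u) []
      simp only [List.append_nil] at h1
      rw [polyLen_eq, ← h1]
      refine arc_bound _ fun x hx => ?_
      have hxx := mem_collapse hx
      simp only [vertexList, List.mem_map, List.mem_range] at hxx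
      obtain ⟨i, hi, rfl⟩ := hxx
      exact hb _ (hu.2 i (by omega))
    calc ENNReal.ofReal (polyLen γ m u) ≤ ENNReal.ofReal (2 + polyTCStar γ m u) :=
          ENNReal.ofReal_le_ofReal key
      _ ≤ ENNReal.ofReal 2 + ENNReal.ofReal (polyTCStar γ m u) := ENNReal.ofReal_add_le
      _ ≤ 2 + arcTCStar γ 0 1 := by
        gcongr
        · simp
        · exact le_iSup_of_le m (le_iSup_of_le u (le_iSup_of_le hu le_rfl))
  · intro γ _ hb
    unfold loopLen
    refine iSup_le fun m => iSup_le fun u => iSup_le fun hu => ?_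
    refine le_iSup_of_le m (le_iSup_of_le u (le_iSup_of_le hu ?_))
    apply ENNReal.ofReal_le_ofReal
    have hmem : ∀ x ∈ loopVertexList γ m u, ‖x‖ ≤ 1 := by
      intro x hx
      simp only [loopVertexList, List.mem_map] at hx
      obtain ⟨i, -, rfl⟩ := hx
      exact hb _
    unfold loopPolyLen loopPolyTCStar
    obtain ⟨a, t, hat⟩ : ∃ a t, loopVertexList γ m u = a :: t := by
      unfold loopVertexList
      rw [List.range_succ_eq_map]
      exact ⟨_, _, rfl⟩
    rw [hat] at hmem ⊢
    obtain ⟨r, hr, hl⟩ := lenList_cyclicCollapse a t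
    have hm : ∀ x ∈ cyclicCollapse (a :: t), ‖x‖ ≤ 1 := fun x hx =>
      hmem x (mem_cyclicCollapse hx)
    rw [hr] at hm ⊢
    have e : (a :: t).take 1 = [a] := rfl
    rw [e, ← hl]
    exact loop_bound a r hm
end

section
/- Let γ : [0,1] → ℝ^d be a continuous arc whose total curvature satisfies TC(γ) ≤ α for some α < π. Then γ is rectifiable, and for all 0 ≤ s < t ≤ 1 with γ(s) ≠ γ(t), Len(γ|[s,t]) ≤ ‖γ(t) − γ(s)‖ / cos(α/2). In particular, the distortion of γ is at most sec(α/2). -/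
open Set Filter MeasureTheory
open scoped ENNReal NNReal RealInnerProductSpace

/-- The (Gromov) distortion of the arc `γ : [0,1] → E`: the supremum of
`Len(γ|[s,t]) / ‖γ t - γ s‖` over `0 ≤ s < t ≤ 1` with `γ s ≠ γ t`, valued in `[0,∞]`. -/
noncomputable def disto {E : Type*} [NormedAddCommGroup E] (γ : ℝ → E) : ℝ≥0∞ :=
  ⨆ (s : ℝ) (t : ℝ) (_ : 0 ≤ s ∧ s < t ∧ t ≤ 1 ∧ γ s ≠ γ t),
    arcLen γ s t / ENNReal.ofReal ‖γ t - γ s‖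

section Helpers

open InnerProductGeometry

/-- Sum of `f` over the edge vectors of a list of points. -/
def edgeSum {E : Type*} [AddCommGroup E] (f : E → ℝ) : List E → ℝ
  | a :: b :: l => f (b - a) + edgeSum f (b :: l)
  | _ => 0

theorem edgeSum_destutter' {E : Type*} [AddCommGroup E] (f : E → ℝ) (hf : f 0 = 0)
    [DecidableRel (fun x y : E => x ≠ y)] (l : List E) (a : E) :
    (∃ l', List.destutter' (· ≠ ·) a l = a :: l') ∧
      edgeSum f (List.destutter' (· ≠ ·) a l) = edgeSum f (a :: l) := by
  induction l generalizing a with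
  | nil => exact ⟨⟨[], rfl⟩, rfl⟩
  | cons b l ih =>
    by_cases h : a ≠ b
    · rw [List.destutter'_cons_pos _ h]
      refine ⟨⟨_, rfl⟩, ?_⟩
      obtain ⟨⟨l', hl'⟩, h2⟩ := ih b
      rw [hl'] at h2 ⊢
      simp only [edgeSum] at h2 ⊢
      rw [h2]
    · rw [List.destutter'_cons_neg _ h]
      push Not at h
      subst h
      refine ⟨(ih a).1, ?_⟩
      rw [(ih a).2]
      simp [edgeSum, hf]

theorem edgeSum_collapse {E : Type*} [AddCommGroup E] (f : E → ℝ) (hf : f 0 = 0) (l : List E) :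
    edgeSum f (collapse l) = edgeSum f l := by
  cases l with
  | nil => rfl
  | cons a l =>
    let _ : DecidableRel (fun x y : E => x ≠ y) := Classical.decRel _
    exact (edgeSum_destutter' f hf l a).2

theorem isChain_collapse {E : Type*} (l : List E) : (collapse l).IsChain (· ≠ ·) := by
  let _ : DecidableRel (fun x y : E => x ≠ y) := Classical.decRel _
  exact List.isChain_destutter (R := fun x y : E => x ≠ y) l

theorem edgeSum_map_range {E : Type*} [AddCommGroup E] (f : E → ℝ) (m : ℕ) (v : ℕ → E) :
    edgeSum f ((List.range (m + 1)).map v) = ∑ i ∈ Finset.range m, f (v (i + 1) - v i) := by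
  induction m generalizing v with
  | zero => simp [edgeSum]
  | succ m ih =>
    have h := ih (fun i => v (i + 1))
    rw [Finset.sum_range_succ', ← h, List.range_succ_eq_map, List.map_cons, List.map_map,
      List.range_succ_eq_map, List.map_cons, List.map_map, edgeSum, add_comm]
    rw [List.map_cons, List.map_map]
    rfl

variable {E : Type*} [NormedAddCommGroup E] [InnerProductSpace ℝ E]

theorem turnSum_nonneg : ∀ l : List E, 0 ≤ turnSum l
  | a :: b :: c :: l => by
    rw [turnSum]; exact add_nonneg (angle_nonneg _ _) (turnSum_nonneg _)
  | [] => le_rfl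
  | [_] => le_rfl
  | [_, _] => le_rfl

theorem edge_bound (N e : E) (β : ℝ) (hβ : β ≤ Real.pi) (h : angle N e ≤ β) :
    Real.cos β * ‖N‖ * ‖e‖ ≤ ⟪N, e⟫ := by
  rw [← cos_angle_mul_norm_mul_norm, mul_assoc]
  exact mul_le_mul_of_nonneg_right (Real.cos_le_cos_of_nonneg_of_le_pi (angle_nonneg _ _) hβ h)
    (by positivity)

theorem cone_bound (N : E) (β : ℝ) (hβ : β ≤ Real.pi) (l : List E) : ∀ a b : E,
    angle N (b - a) + turnSum (a :: b :: l) ≤ β →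
    Real.cos β * ‖N‖ * edgeSum (fun e => ‖e‖) (a :: b :: l) ≤
      edgeSum (fun e => ⟪N, e⟫) (a :: b :: l) := by
  induction l with
  | nil =>
    intro a b h
    simp only [turnSum, edgeSum, add_zero] at h ⊢
    exact edge_bound N _ β hβ h
  | cons c l ih =>
    intro a b h
    rw [turnSum] at h
    have h1 := angle_le_angle_add_angle N (b - a) (c - b)
    have h2 := ih b c (by linarith)
    have h3 := edge_bound N (b - a) β hβ
      (by linarith [angle_nonneg (b - a) (c - b), turnSum_nonneg (b :: c :: l)])
    rw [edgeSum, edgeSum.eq_1 (fun e => ⟪N, e⟫), mul_add]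
    linarith

theorem exists_between_vec (x z : E) (hx : x ≠ 0) (hz : z ≠ 0) (hxz : angle x z < Real.pi) (s : ℝ)
    (hs0 : 0 ≤ s) (hs : s ≤ angle x z) :
    ∃ N : E, N ≠ 0 ∧ angle x N = s ∧ angle N z = angle x z - s := by
  have hne : ∀ r ∈ Set.Icc (0 : ℝ) 1, (1 - r) • x + r • z ≠ 0 := by
    intro r hr h0
    have hr0 : r ≠ 0 := by
      rintro rfl; simp at h0; exact hx h0
    have hr1 : r ≠ 1 := by
      rintro rfl; simp at h0; exact hz h0
    have hr0' : 0 < r := lt_of_le_of_ne hr.1 hr0.symm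
    have hr1' : 0 < 1 - r := sub_pos.2 (lt_of_le_of_ne hr.2 hr1)
    have e1 : r • z = -((1 - r) • x) := by
      rw [eq_neg_iff_add_eq_zero, add_comm]; exact h0
    have : angle x z = Real.pi := by
      rw [← angle_smul_right_of_pos x z hr0', e1, ← angle_smul_left_of_pos x _ hr1',
        angle_self_neg_of_nonzero (smul_ne_zero hr1'.ne' hx)]
    linarith
  have hcont : ContinuousOn (fun r : ℝ => angle x ((1 - r) • x + r • z)) (Set.Icc 0 1) := by
    intro r hr
    apply ContinuousAt.continuousWithinAt
    have h1 : ContinuousAt (fun r : ℝ => (x, (1 - r) • x + r • z)) r := by fun_prop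
    have h2 : ContinuousAt (fun y : E × E => angle y.1 y.2) (x, (1 - r) • x + r • z) :=
      continuousAt_angle hx (hne r hr)
    have h3 := Filter.Tendsto.comp h2 h1
    exact h3
  have hivt := intermediate_value_Icc (zero_le_one' ℝ) hcont
  obtain ⟨r, hr, hrs⟩ := hivt (show s ∈ _ by
    simp only [sub_zero, one_smul, zero_smul, add_zero, sub_self, zero_add, angle_self hx]
    exact ⟨hs0, hs⟩)
  refine ⟨_, hne r hr, hrs, ?_⟩
  have := angle_eq_angle_add_add_angle_add_of_mem_span (x := x) (z := z) (hne r hr) (by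
    rw [Submodule.mem_span_pair]
    exact ⟨⟨1 - r, sub_nonneg.2 hr.2⟩, ⟨r, hr.1⟩, rfl⟩)
  simp only at hrs
  linarith

theorem exists_cone (β : ℝ) (hβ : β ≤ Real.pi) (l : List E) : ∀ (a b : E) (s : ℝ),
    (a :: b :: l).IsChain (· ≠ ·) → turnSum (a :: b :: l) < Real.pi → 0 ≤ s →
    s ≤ turnSum (a :: b :: l) → s ≤ β → turnSum (a :: b :: l) - s ≤ β →
    ∃ N : E, N ≠ 0 ∧ angle N (b - a) ≤ s ∧
      Real.cos β * ‖N‖ * edgeSum (fun e => ‖e‖) (a :: b :: l) ≤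
      edgeSum (fun e => ⟪N, e⟫) (a :: b :: l) := by
  induction l with
  | nil =>
    intro a b s hc _ hs0 _ hsβ _
    have hab : b - a ≠ 0 := by
      simp at hc; exact sub_ne_zero.2 (Ne.symm hc)
    have h0 : angle (b - a) (b - a) ≤ s := by rw [angle_self hab]; exact hs0
    refine ⟨b - a, hab, h0, ?_⟩
    simp only [edgeSum, add_zero]
    exact edge_bound _ _ β hβ (h0.trans hsβ)
  | cons c l ih =>
    intro a b s hc hpi hs0 hsS hsβ hSβ
    obtain ⟨h1, hc'⟩ := List.isChain_cons_cons.1 hc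
    obtain ⟨h2, -⟩ := List.isChain_cons_cons.1 hc'
    have hab : b - a ≠ 0 := sub_ne_zero.2 (Ne.symm h1)
    have hbc : c - b ≠ 0 := sub_ne_zero.2 (Ne.symm h2)
    rw [turnSum] at hpi hsS hSβ
    have hT := turnSum_nonneg (b :: c :: l)
    have hA := angle_nonneg (b - a) (c - b)
    have key : ∃ N : E, N ≠ 0 ∧ angle N (b - a) ≤ s ∧
        Real.cos β * ‖N‖ * edgeSum (fun e => ‖e‖) (b :: c :: l) ≤
          edgeSum (fun e => ⟪N, e⟫) (b :: c :: l) := by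
      rcases le_total s (angle (b - a) (c - b)) with hs | hs
      · obtain ⟨N, hN, hN1, hN2⟩ := exists_between_vec _ _ hab hbc (by linarith) s hs0 hs
        refine ⟨N, hN, by rw [angle_comm, hN1], cone_bound N β hβ l b c (by linarith)⟩
      · obtain ⟨N, hN, hN1, hN2⟩ := ih b c (s - angle (b - a) (c - b)) hc' (by linarith)
          (by linarith) (by linarith) (by linarith) (by linarith)
        refine ⟨N, hN, ?_, hN2⟩
        have := angle_le_angle_add_angle N (c - b) (b - a)
        rw [angle_comm (c - b)] at this
        linarith
    obtain ⟨N, hN, hN1, hN2⟩ := key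
    refine ⟨N, hN, hN1, ?_⟩
    have h3 := edge_bound N (b - a) β hβ (hN1.trans hsβ)
    rw [edgeSum, edgeSum.eq_1 (fun e => ⟪N, e⟫), mul_add]
    linarith

theorem polyLen_bound (γ : ℝ → E) (m : ℕ) (u : ℕ → ℝ) (α : ℝ) (hα : α < Real.pi)
    (h : polyTC γ m u ≤ α) :
    Real.cos (α / 2) * polyLen γ m u ≤ ‖γ (u m) - γ (u 0)‖ := by
  have hL : polyLen γ m u = edgeSum (fun e => ‖e‖) (collapse (vertexList γ m u)) := by
    rw [edgeSum_collapse _ (by simp), vertexList, edgeSum_map_range]; rfl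
  have hI : ∀ N : E, edgeSum (fun e => ⟪N, e⟫) (collapse (vertexList γ m u)) =
      ⟪N, γ (u m) - γ (u 0)⟫ := by
    intro N
    rw [edgeSum_collapse _ (by simp), vertexList, edgeSum_map_range, ← inner_sum]
    rw [Finset.sum_range_sub (fun i => γ (u i))]
  have hch := isChain_collapse (vertexList γ m u)
  rw [polyTC] at h
  rw [hL]
  have hnn := turnSum_nonneg (collapse (vertexList γ m u))
  generalize collapse (vertexList γ m u) = L at *
  match L with
  | [] => simp [edgeSum]
  | [a] => simp [edgeSum]
  | a :: b :: l =>
    obtain ⟨N, hN, -, hb⟩ := exists_cone (α / 2) (by linarith [Real.pi_pos]) l a b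
      (turnSum (a :: b :: l) / 2) hch (by linarith) (by linarith) (by linarith) (by linarith)
      (by linarith)
    rw [hI] at hb
    have h1 := hb.trans (real_inner_le_norm _ _)
    have h2 : 0 < ‖N‖ := norm_pos_iff.2 hN
    refine le_of_mul_le_mul_left ?_ h2
    linarith

/-- Every inscribed polygon can be enlarged so as to contain both end points. -/
theorem exists_enlarge (γ : ℝ → E) (s t : ℝ) (m : ℕ) (u : ℕ → ℝ) (h : InscribedIn s t m u) :
    ∃ m' u', InscribedIn s t m' u' ∧ u' 0 = s ∧ u' m' = t ∧ polyLen γ m u ≤ polyLen γ m' u' := by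
  have step1 : ∃ m' u', InscribedIn s t m' u' ∧ u' 0 = s ∧ polyLen γ m u ≤ polyLen γ m' u' := by
    by_cases h0 : u 0 = s
    · exact ⟨m, u, h, h0, le_rfl⟩
    · have hlt : s < u 0 := lt_of_le_of_ne (h.2 0 (Nat.zero_le _)).1 (Ne.symm h0)
      refine ⟨m + 1, fun i => Nat.casesOn i s u, ⟨?_, ?_⟩, rfl, ?_⟩
      · rintro (_ | i) hi
        · exact hlt
        · exact h.1 i (by omega)
      · rintro (_ | i) hi
        · exact ⟨le_rfl, hlt.le.trans (h.2 0 (Nat.zero_le _)).2⟩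
        · exact h.2 i (by omega)
      · rw [polyLen, polyLen, Finset.sum_range_succ']
        exact le_add_of_nonneg_right (norm_nonneg _)
  obtain ⟨m, u', h', h0, hle⟩ := step1
  by_cases h1 : u' m = t
  · exact ⟨m, u', h', h0, h1, hle⟩
  · have hlt : u' m < t := lt_of_le_of_ne (h'.2 m le_rfl).2 h1
    refine ⟨m + 1, fun i => if i ≤ m then u' i else t, ⟨?_, ?_⟩, by simpa using h0, by simp, ?_⟩
    · intro i hi
      rcases Nat.lt_or_ge i m with hi' | hi'
      · have a1 : i ≤ m := by omega
        have a2 : i + 1 ≤ m := by omega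
        simp only [a1, a2, if_true]
        exact h'.1 i hi'
      · obtain rfl : i = m := by omega
        simpa using hlt
    · intro i hi
      dsimp only
      split_ifs with hi'
      · exact h'.2 i hi'
      · exact ⟨(h'.2 m le_rfl).1.trans hlt.le, le_rfl⟩
    · refine hle.trans ?_
      rw [polyLen, polyLen, Finset.sum_range_succ]
      refine le_trans (le_of_eq ?_) (le_add_of_nonneg_right (norm_nonneg _))
      refine Finset.sum_congr rfl fun i hi => ?_
      have hi := Finset.mem_range.1 hi
      have a1 : i ≤ m := by omega
      have a2 : i + 1 ≤ m := by omega
      simp only [a1, a2, if_true]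

theorem arcLen_bound (γ : ℝ → E) (α : ℝ) (hα0 : 0 ≤ α) (hα : α < Real.pi)
    (hTC : arcTC γ 0 1 ≤ ENNReal.ofReal α) (s t : ℝ) (hs : 0 ≤ s) (ht : t ≤ 1) :
    arcLen γ s t ≤ ENNReal.ofReal (‖γ t - γ s‖ / Real.cos (α / 2)) := by
  have hcos : 0 < Real.cos (α / 2) :=
    Real.cos_pos_of_mem_Ioo ⟨by linarith [Real.pi_pos], by linarith⟩
  refine iSup_le fun m => iSup_le fun u => iSup_le fun hu => ?_
  obtain ⟨m', u', hu', h0, h1, hle⟩ := exists_enlarge γ s t m u hu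
  refine ENNReal.ofReal_le_ofReal (hle.trans ?_)
  rw [le_div_iff₀ hcos, mul_comm]
  have hins : InscribedIn 0 1 m' u' :=
    ⟨hu'.1, fun i hi => ⟨hs.trans (hu'.2 i hi).1, (hu'.2 i hi).2.trans ht⟩⟩
  have h2 : ENNReal.ofReal (polyTC γ m' u') ≤ ENNReal.ofReal α :=
    le_trans (le_iSup_of_le (f := fun m => ⨆ (u : ℕ → ℝ) (_ : InscribedIn 0 1 m u),
      ENNReal.ofReal (polyTC γ m u)) m' (le_iSup_of_le u' (le_iSup_of_le hins le_rfl))) hTC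
  have h3 := polyLen_bound γ m' u' α hα ((ENNReal.ofReal_le_ofReal_iff hα0).1 h2)
  rwa [h0, h1] at h3

end Helpers

/-- a continuous arc `γ : [0,1] → ℝᵈ` with total curvature at most
`α < π` is rectifiable, satisfies `Len(γ|[s,t]) ≤ ‖γ t - γ s‖ / cos(α/2)` whenever
`γ s ≠ γ t`, and in particular has distortion at most `sec(α/2)`. -/
theorem distortion_le_of_tc_lt_pi (d : ℕ) (γ : ℝ → EuclideanSpace ℝ (Fin d))
    (hγ : ContinuousOn γ (Set.Icc 0 1)) (α : ℝ) (hα0 : 0 ≤ α) (hα : α < Real.pi)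
    (hTC : arcTC γ 0 1 ≤ ENNReal.ofReal α) :
    arcLen γ 0 1 ≠ ⊤ ∧
    (∀ s t : ℝ, 0 ≤ s → s < t → t ≤ 1 → γ s ≠ γ t →
      arcLen γ s t ≤ ENNReal.ofReal (‖γ t - γ s‖ / Real.cos (α / 2))) ∧
    disto γ ≤ ENNReal.ofReal (1 / Real.cos (α / 2)) := by
  have hb := arcLen_bound γ α hα0 hα hTC
  have hcos : 0 < Real.cos (α / 2) :=
    Real.cos_pos_of_mem_Ioo ⟨by linarith [Real.pi_pos], by linarith⟩
  refine ⟨ne_top_of_le_ne_top ENNReal.ofReal_ne_top (hb 0 1 le_rfl le_rfl),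
    fun s t hs _ ht _ => hb s t hs ht, ?_⟩
  refine iSup_le fun s => iSup_le fun t => iSup_le fun h => ?_
  obtain ⟨hs, -, ht, hne⟩ := h
  have hpos : 0 < ‖γ t - γ s‖ := norm_pos_iff.2 (sub_ne_zero.2 hne.symm)
  refine ENNReal.div_le_of_le_mul ((hb s t hs ht).trans (le_of_eq ?_))
  rw [← ENNReal.ofReal_mul (by positivity)]
  congr 1
  field_simp
end

section
/- (Lower semicontinuity of distortion) Let γ_j, γ : [0,1] → ℝ^d be continuous arcs such that the Fréchet distance d_F(γ_j, γ) → 0 as j → ∞. Then δ(γ) ≤ liminf_{j→∞} δ(γ_j), where δ denotes distortion. -/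
open Set Filter MeasureTheory
open scoped ENNReal NNReal RealInnerProductSpace

/-- lower semicontinuity of distortion: if continuous arcs `γj` converge
to `γ` in Fréchet distance, then `δ(γ) ≤ liminf δ(γj)`. -/
theorem distortion_lower_semicontinuous (d : ℕ)
    (γj : ℕ → ℝ → EuclideanSpace ℝ (Fin d)) (γ : ℝ → EuclideanSpace ℝ (Fin d))
    (hγj : ∀ j, ContinuousOn (γj j) (Set.Icc 0 1)) (hγ : ContinuousOn γ (Set.Icc 0 1))
    (hfrechet : ∀ ε : ℝ, 0 < ε → ∃ N, ∀ j ≥ N, ∃ h : ℝ → ℝ,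
      ContinuousOn h (Set.Icc 0 1) ∧ StrictMonoOn h (Set.Icc 0 1) ∧
      h 0 = 0 ∧ h 1 = 1 ∧ ∀ t ∈ Set.Icc (0 : ℝ) 1, ‖γj j t - γ (h t)‖ ≤ ε) :
    disto γ ≤ Filter.liminf (fun j => disto (γj j)) Filter.atTop := by
  unfold disto
  refine iSup_le fun s => iSup_le fun t => iSup_le fun hst => ?_
  obtain ⟨hs0, hlt, ht1, hne⟩ := hst
  have hD : 0 < ‖γ t - γ s‖ := norm_pos_iff.2 (sub_ne_zero.2 (Ne.symm hne))
  unfold arcLen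
  simp only [ENNReal.iSup_div]
  refine iSup_le fun m => iSup_le fun u => iSup_le fun hu => ?_
  rw [← ENNReal.ofReal_div_of_pos hD]
  refine le_of_forall_lt fun c hc => ?_
  set L := polyLen γ m u with hL
  set D := ‖γ t - γ s‖ with hDdef
  have hcont : Tendsto (fun ε : ℝ => ENNReal.ofReal ((L - m * (2 * ε)) / (D + 2 * ε)))
      (nhdsWithin 0 (Set.Ioi 0)) (nhds (ENNReal.ofReal (L / D))) := by
    have h1 : ContinuousAt (fun ε : ℝ => (L - m * (2 * ε)) / (D + 2 * ε)) 0 := by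
      refine ContinuousAt.div (by fun_prop) (by fun_prop) ?_
      simp [hD.ne']
    have h2 := ENNReal.tendsto_ofReal h1.tendsto
    simp only [mul_zero, sub_zero, add_zero] at h2
    exact h2.mono_left nhdsWithin_le_nhds
  obtain ⟨c', hcc', hc'⟩ := exists_between hc
  have hev := hcont.eventually (lt_mem_nhds hc')
  have hsmall : ∀ᶠ ε : ℝ in nhdsWithin 0 (Set.Ioi 0), ε < D / 2 :=
    nhdsWithin_le_nhds (gt_mem_nhds (by positivity))
  obtain ⟨ε, ⟨hε1, hε2⟩, hε⟩ := ((hev.and hsmall).and self_mem_nhdsWithin).exists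
  have hε : 0 < ε := hε
  obtain ⟨N, hN⟩ := hfrechet ε hε
  refine lt_of_lt_of_le hcc' (le_liminf_of_le (by isBoundedDefault) ?_)
  filter_upwards [eventually_ge_atTop N] with j hj
  obtain ⟨h, hc, hmono, h0, h1, hclose⟩ := hN j hj
  have hsurj : ∀ y ∈ Set.Icc (0 : ℝ) 1, ∃ x ∈ Set.Icc (0 : ℝ) 1, h x = y := by
    intro y hy
    have := intermediate_value_Icc (zero_le_one' ℝ) hc
    rw [h0, h1] at this
    exact this hy
  have hsurj' : ∀ y : ℝ, ∃ x, y ∈ Set.Icc (0 : ℝ) 1 → x ∈ Set.Icc (0 : ℝ) 1 ∧ h x = y := by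
    intro y
    by_cases hy : y ∈ Set.Icc (0 : ℝ) 1
    · obtain ⟨x, hx⟩ := hsurj y hy
      exact ⟨x, fun _ => hx⟩
    · exact ⟨0, fun h => absurd h hy⟩
  choose g hg using hsurj'
  have glt : ∀ y ∈ Set.Icc (0 : ℝ) 1, ∀ z ∈ Set.Icc (0 : ℝ) 1, y < z → g y < g z := by
    intro y hy z hz hyz
    rw [← hmono.lt_iff_lt (hg y hy).1 (hg z hz).1, (hg y hy).2, (hg z hz).2]
    exact hyz
  have gle : ∀ y ∈ Set.Icc (0 : ℝ) 1, ∀ z ∈ Set.Icc (0 : ℝ) 1, y ≤ z → g y ≤ g z := by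
    intro y hy z hz hyz
    rw [← hmono.le_iff_le (hg y hy).1 (hg z hz).1, (hg y hy).2, (hg z hz).2]
    exact hyz
  have gclose : ∀ y ∈ Set.Icc (0 : ℝ) 1, ‖γj j (g y) - γ y‖ ≤ ε := by
    intro y hy
    have := hclose (g y) (hg y hy).1
    rwa [(hg y hy).2] at this
  have hs : s ∈ Set.Icc (0 : ℝ) 1 := ⟨hs0, by linarith⟩
  have ht : t ∈ Set.Icc (0 : ℝ) 1 := ⟨by linarith, ht1⟩
  have hui : ∀ i ≤ m, u i ∈ Set.Icc (0 : ℝ) 1 := fun i hi =>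
    ⟨hs0.trans (hu.2 i hi).1, (hu.2 i hi).2.trans ht1⟩
  have key : ∀ y ∈ Set.Icc (0 : ℝ) 1, ∀ z ∈ Set.Icc (0 : ℝ) 1,
      ‖γ z - γ y‖ - 2 * ε ≤ ‖γj j (g z) - γj j (g y)‖ ∧
      ‖γj j (g z) - γj j (g y)‖ ≤ ‖γ z - γ y‖ + 2 * ε := by
    intro y hy z hz
    have a := gclose y hy
    have b := gclose z hz
    have e : ‖(γj j (g z) - γj j (g y)) - (γ z - γ y)‖ ≤ 2 * ε := by
      have : (γj j (g z) - γj j (g y)) - (γ z - γ y)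
          = (γj j (g z) - γ z) - (γj j (g y) - γ y) := by abel
      rw [this]
      exact (norm_sub_le _ _).trans (by linarith)
    have f := (abs_le.1 ((abs_norm_sub_norm_le _ _).trans e))
    constructor <;> linarith [f.1, f.2]
  have hins : InscribedIn (g s) (g t) m (fun i => g (u i)) :=
    ⟨fun i hi => glt _ (hui i hi.le) _ (hui (i + 1) hi) (hu.1 i hi),
      fun i hi => ⟨gle _ hs _ (hui i hi) (hu.2 i hi).1, gle _ (hui i hi) _ ht (hu.2 i hi).2⟩⟩
  have hpos : 0 < ‖γj j (g t) - γj j (g s)‖ := by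
    have := (key s hs t ht).1
    linarith
  have hne' : γj j (g s) ≠ γj j (g t) := fun e => by simp [e] at hpos
  have hlen : L - m * (2 * ε) ≤ polyLen (γj j) m (fun i => g (u i)) := by
    have : L - m * (2 * ε)
        = ∑ i ∈ Finset.range m, (‖γ (u (i + 1)) - γ (u i)‖ - 2 * ε) := by
      simp [hL, polyLen, Finset.sum_sub_distrib]
    rw [this]
    refine Finset.sum_le_sum fun i hi => ?_
    have hi := Finset.mem_range.1 hi
    exact (key _ (hui i hi.le) _ (hui (i + 1) hi)).1
  have hlen0 : 0 ≤ polyLen (γj j) m (fun i => g (u i)) :=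
    Finset.sum_nonneg fun i _ => norm_nonneg _
  have hstep : ENNReal.ofReal ((L - m * (2 * ε)) / (D + 2 * ε)) ≤
      ENNReal.ofReal (polyLen (γj j) m (fun i => g (u i)))
        / ENNReal.ofReal ‖γj j (g t) - γj j (g s)‖ := by
    rw [← ENNReal.ofReal_div_of_pos hpos]
    refine ENNReal.ofReal_le_ofReal ?_
    exact div_le_div₀ hlen0 hlen hpos (key s hs t ht).2
  refine hε1.le.trans (hstep.trans ?_)
  refine le_iSup_of_le (g s) (le_iSup_of_le (g t) (le_iSup_of_le
    ⟨(hg s hs).1.1, glt _ hs _ ht hlt, (hg t ht).1.2, hne'⟩ ?_))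
  refine le_iSup_of_le m (le_iSup_of_le (fun i => g (u i)) (le_iSup_of_le hins le_rfl))
end

section
/- (Wienholtz: interleaved bitangent support planes) Let d ≥ 3 and let γ : ℝ/ℤ → ℝ^d be a continuous closed curve. Then there exist a unit vector v ∈ ℝ^d and parameters t₁ < t₂ < t₃ < t₄ in [0,1) such that ⟨γ(t₁), v⟩ = ⟨γ(t₃), v⟩ = max_{t} ⟨γ(t), v⟩ and ⟨γ(t₂), v⟩ = ⟨γ(t₄), v⟩ = min_{t} ⟨γ(t), v⟩. That is, γ admits a pair of parallel interleaved bitangent support hyperplanes: two parallel hyperplanes bounding a slab containing γ, each touching γ in two points, with the four touch points interleaved along γ. -/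
open Set Filter MeasureTheory
open scoped ENNReal NNReal RealInnerProductSpace

/-! ### A continuous odd map from the sphere to the plane has a zero -/

lemma wh_const_of_exp {X : Type*} [TopologicalSpace X] [PreconnectedSpace X] (D : X → ℂ)
    (hD : Continuous D) (c : ℂ) (h : ∀ x, Complex.exp (D x) = c) (x y : X) : D x = D y := by
  have := Complex.isCoveringMap_exp.eq_of_comp_eq (g₁ := D) (g₂ := fun _ => D y) hD
    continuous_const (by funext z; apply Subtype.ext; simp [h]) y rfl
  exact congrFun this x

lemma wh_borsuk {E : Type*} [NormedAddCommGroup E] [InnerProductSpace ℝ E] (a b c : E)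
    (ha : ‖a‖ = 1) (hb : ‖b‖ = 1) (hc : ‖c‖ = 1)
    (hab : inner ℝ a b = 0) (hac : inner ℝ a c = 0) (hbc : inner ℝ b c = 0)
    (F : E → ℂ) (hF : Continuous F) (hodd : ∀ v, F (-v) = - F v) :
    ∃ v, ‖v‖ = 1 ∧ F v = 0 := by
  by_contra! hne
  set u : ℝ × ℝ → E := fun x => (Real.sin x.1 * Real.cos x.2) • a +
    (Real.sin x.1 * Real.sin x.2) • b + Real.cos x.1 • c with hu
  have hucont : Continuous u := by rw [hu]; fun_prop
  have hunorm : ∀ x, ‖u x‖ = 1 := by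
    intro x
    have h1 : ‖u x‖ ^ 2 = 1 := by
      rw [← real_inner_self_eq_norm_sq]
      simp only [hu, inner_add_left, inner_add_right, real_inner_smul_left, real_inner_smul_right,
        real_inner_self_eq_norm_sq, ha, hb, hc, hab, hac, hbc, real_inner_comm a b,
        real_inner_comm a c, real_inner_comm b c, norm_smul, mul_pow, Real.norm_eq_abs, sq_abs]
      have e1 := Real.sin_sq_add_cos_sq x.1
      have e2 := Real.sin_sq_add_cos_sq x.2
      linear_combination Real.sin x.1 ^ 2 * e2 + e1
    have h0 := norm_nonneg (u x)
    nlinarith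
  obtain ⟨g, ⟨-, hg⟩, -⟩ := Complex.isCoveringMapOn_exp.existsUnique_continuousMap_lifts
    (A := ℝ × ℝ) ⟨fun x => F (u x), by fun_prop⟩ (a₀ := (0, 0)) (e₀ := Complex.log (F (u (0, 0))))
    (Complex.exp_log (hne _ (hunorm _))) (fun x => hne _ (hunorm x))
  have hg' : ∀ x, Complex.exp (g x) = F (u x) := fun x => congrFun hg x
  have hper : ∀ x : ℝ × ℝ, u (x.1, x.2 + 2 * Real.pi) = u x := by
    intro x; simp [hu]
  have h1 : ∀ θ, g (0, θ) = g (0, 0) := fun θ =>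
    wh_const_of_exp (fun θ : ℝ => g (0, θ)) (by fun_prop) (F (u (0, 0)))
      (fun θ => by rw [hg']; simp [hu]) θ 0
  have h2 : ∀ x : ℝ × ℝ, g (x.1, x.2 + 2 * Real.pi) - g x = 0 := by
    intro x
    have := wh_const_of_exp (fun x : ℝ × ℝ => g (x.1, x.2 + 2 * Real.pi) - g x) (by fun_prop) 1
      (fun x => by
        rw [Complex.exp_sub, hg', hg', hper]
        exact div_self (hne _ (hunorm x))) x (0, 0)
    rw [this]
    simp [h1]
  have hanti : ∀ θ : ℝ, u (Real.pi / 2, θ + Real.pi) = - u (Real.pi / 2, θ) := by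
    intro θ; simp [hu]; abel
  have h3 : ∀ θ : ℝ, Complex.exp (g (Real.pi / 2, θ + Real.pi) - g (Real.pi / 2, θ)) = -1 := by
    intro θ
    rw [Complex.exp_sub, hg', hg', hanti, hodd, neg_div, div_self (hne _ (hunorm _))]
  have h4 := wh_const_of_exp
    (fun θ : ℝ => g (Real.pi / 2, θ + Real.pi) - g (Real.pi / 2, θ)) (by fun_prop) (-1) h3
    (0 + Real.pi) 0
  have h5 := h2 (Real.pi / 2, 0)
  have h6 := h3 0
  simp only at h4 h5
  rw [show (0 : ℝ) + Real.pi + Real.pi = 0 + 2 * Real.pi by ring] at h4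
  have h7 : g (Real.pi / 2, 0 + Real.pi) - g (Real.pi / 2, 0) = 0 := by
    linear_combination h5 / 2 - h4 / 2
  rw [h7, Complex.exp_zero] at h6
  norm_num at h6

/-! ### Sign changes of functions orthogonal to `1, cos, sin` -/

lemma wh_sin_sign {x y : ℝ} (hx0 : 0 ≤ x) (hy1 : y ≤ 1) (hxy : x ≤ y) :
    0 ≤ Real.sin (Real.pi * (y - x)) := by
  have := Real.pi_pos
  apply Real.sin_nonneg_of_nonneg_of_le_pi
  · exact mul_nonneg this.le (by linarith)
  · nlinarith

lemma wh_sin_ne {x y : ℝ} (hx : x ∈ Icc (0 : ℝ) 1) (hy : y ∈ Ioo (0 : ℝ) 1) (hxy : y ≠ x) :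
    Real.sin (Real.pi * (y - x)) ≠ 0 := by
  have := Real.pi_pos
  obtain ⟨hx0, hx1⟩ := hx
  obtain ⟨hy0, hy1⟩ := hy
  rcases lt_or_gt_of_ne hxy with h | h
  · apply ne_of_lt
    apply Real.sin_neg_of_neg_of_neg_pi_lt
    · nlinarith
    · nlinarith
  · apply ne_of_gt
    apply Real.sin_pos_of_pos_of_lt_pi
    · nlinarith
    · nlinarith

lemma wh_zero_of_integral {f : ℝ → ℝ} (hf : Continuous f) (h : ∀ t ∈ Icc (0 : ℝ) 1, 0 ≤ f t)
    (hi : ∫ t in (0 : ℝ)..1, f t = 0) : ∀ t ∈ Icc (0 : ℝ) 1, f t = 0 := by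
  intro t ht
  by_contra hne
  have := intervalIntegral.integral_pos (zero_lt_one' ℝ) hf.continuousOn
    (fun x hx => h x ⟨hx.1.le, hx.2⟩) ⟨t, ht, lt_of_le_of_ne (h t ht) (Ne.symm hne)⟩
  linarith

lemma wh_pattern {W : ℝ → ℝ} (hW : Continuous W)
    (h1 : ∫ t in (0 : ℝ)..1, W t = 0)
    (hcos : ∫ t in (0 : ℝ)..1, W t * Real.cos (2 * Real.pi * t) = 0)
    (hsin : ∫ t in (0 : ℝ)..1, W t * Real.sin (2 * Real.pi * t) = 0)
    (hne : ∃ t ∈ Icc (0 : ℝ) 1, W t ≠ 0) :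
    ∃ x y z, 0 ≤ x ∧ x < y ∧ y < z ∧ z ≤ 1 ∧ 0 < W x ∧ W y < 0 ∧ 0 < W z := by
  by_contra! hno
  set P : Set ℝ := {t | t ∈ Icc (0 : ℝ) 1 ∧ 0 < W t} with hP
  obtain ⟨t₀, ht₀, hWt₀⟩ := hne
  have hPne : P.Nonempty := by
    by_contra hemp
    rw [Set.not_nonempty_iff_eq_empty] at hemp
    have hle : ∀ t ∈ Icc (0 : ℝ) 1, 0 ≤ - W t := by
      intro t ht
      by_contra hlt
      have : t ∈ P := ⟨ht, by linarith⟩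
      rw [hemp] at this
      exact this
    have := wh_zero_of_integral hW.neg hle (by
      rw [show (∫ t in (0 : ℝ)..1, (-W) t) = - ∫ t in (0 : ℝ)..1, W t from
        intervalIntegral.integral_neg, h1, neg_zero]) t₀ ht₀
    exact hWt₀ (by simpa using this)
  have hbelow : BddBelow P := ⟨0, fun t ht => ht.1.1⟩
  have habove : BddAbove P := ⟨1, fun t ht => ht.1.2⟩
  set p := sInf P with hp
  set q := sSup P with hq
  have hp0 : 0 ≤ p := le_csInf hPne fun t ht => ht.1.1
  have hq1 : q ≤ 1 := csSup_le hPne fun t ht => ht.1.2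
  have hpq : p ≤ q := csInf_le_csSup hPne hbelow habove
  set h : ℝ → ℝ := fun t => Real.sin (Real.pi * (t - p)) * Real.sin (Real.pi * (t - q)) with hh
  have hhc : Continuous h := by rw [hh]; fun_prop
  -- signs
  have hsign : ∀ t ∈ Icc (0 : ℝ) 1, 0 ≤ -(W t * h t) := by
    intro t ht
    have swap : ∀ x y : ℝ, Real.sin (Real.pi * (x - y)) = - Real.sin (Real.pi * (y - x)) := by
      intro x y; rw [← Real.sin_neg]; congr 1; ring
    rcases lt_or_ge t p with htp | htp
    · have hWt : W t ≤ 0 := by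
        by_contra hlt
        have : p ≤ t := csInf_le hbelow ⟨ht, by linarith⟩
        linarith
      have e1 := wh_sin_sign ht.1 (hpq.trans hq1) htp.le
      have e2 := wh_sin_sign ht.1 hq1 (htp.le.trans hpq)
      have : 0 ≤ h t := by
        simp only [hh]; rw [swap t p, swap t q]; nlinarith [mul_nonneg e1 e2]
      nlinarith
    rcases lt_or_ge q t with htq | htq
    · have hWt : W t ≤ 0 := by
        by_contra hlt
        have : t ≤ q := le_csSup habove ⟨ht, by linarith⟩
        linarith
      have e1 := wh_sin_sign hp0 ht.2 htp
      have e2 := wh_sin_sign (hp0.trans hpq) ht.2 htq.le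
      have : 0 ≤ h t := mul_nonneg e1 e2
      nlinarith
    have e1 := wh_sin_sign hp0 ht.2 htp
    have e2 := wh_sin_sign ht.1 hq1 htq
    have hht : h t ≤ 0 := by
      simp only [hh]; rw [swap t q]; nlinarith [mul_nonneg e1 e2]
    rcases eq_or_lt_of_le htp with htp | htp
    · simp [hh, htp]
    rcases eq_or_lt_of_le htq with htq | htq
    · simp [hh, htq]
    have hWt : 0 ≤ W t := by
      by_contra hlt
      obtain ⟨x, hx, hxt⟩ := exists_lt_of_csInf_lt hPne htp
      obtain ⟨z, hz, hzt⟩ := exists_lt_of_lt_csSup hPne htq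
      have := hno x t z hx.1.1 hxt hzt hz.1.2 hx.2 (by linarith)
      linarith [hz.2]
    nlinarith
  have hint : ∫ t in (0 : ℝ)..1, -(W t * h t) = 0 := by
    have hexp : ∀ t, -(W t * h t) = (-(Real.cos (Real.pi * (q - p)) / 2)) * W t +
        (Real.cos (Real.pi * (p + q)) / 2) * (W t * Real.cos (2 * Real.pi * t)) +
        (Real.sin (Real.pi * (p + q)) / 2) * (W t * Real.sin (2 * Real.pi * t)) := by
      intro t
      have e1 : Real.cos (Real.pi * (q - p)) =
          Real.cos (Real.pi * (t - p) - Real.pi * (t - q)) := by congr 1; ring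
      have e2 : Real.cos (Real.pi * (t - p) + Real.pi * (t - q)) =
          Real.cos (2 * Real.pi * t - Real.pi * (p + q)) := by congr 1; ring
      rw [Real.cos_add, Real.cos_sub] at e2
      rw [Real.cos_sub] at e1
      simp only [hh]
      linear_combination W t / 2 * e1 + W t / 2 * e2
    simp_rw [hexp]
    rw [intervalIntegral.integral_add, intervalIntegral.integral_add,
      intervalIntegral.integral_const_mul, intervalIntegral.integral_const_mul,
      intervalIntegral.integral_const_mul, h1, hcos, hsin]
    · simp
    all_goals
      apply Continuous.intervalIntegrable
      fun_prop
  have hz := wh_zero_of_integral (by fun_prop) hsign hint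
  have hae : W =ᵐ[volume.restrict (Icc (0 : ℝ) 1)] fun _ => (0 : ℝ) := by
    have hfin : ({0, 1, p, q} : Set ℝ).Finite := by simp
    have h0 : ∀ᵐ t ∂(volume : Measure ℝ), t ∉ ({0, 1, p, q} : Set ℝ) :=
      measure_eq_zero_iff_ae_notMem.mp (hfin.measure_zero volume)
    have h0' := ae_restrict_of_ae (s := Icc (0 : ℝ) 1) h0
    filter_upwards [h0', ae_restrict_mem (measurableSet_Icc)] with t ht ht'
    simp only [mem_insert_iff, mem_singleton_iff, not_or] at ht
    have htoo : t ∈ Ioo (0 : ℝ) 1 :=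
      ⟨lt_of_le_of_ne ht'.1 (Ne.symm ht.1), lt_of_le_of_ne ht'.2 ht.2.1⟩
    have hht : h t ≠ 0 := mul_ne_zero
      (wh_sin_ne ⟨hp0, hpq.trans hq1⟩ htoo ht.2.2.1) (wh_sin_ne ⟨hp0.trans hpq, hq1⟩ htoo ht.2.2.2)
    have := hz t ht'
    rw [neg_eq_zero, mul_eq_zero] at this
    exact this.resolve_right hht
  exact hWt₀ (Measure.eqOn_Icc_of_ae_eq volume (zero_ne_one' ℝ) hae hW.continuousOn
    continuousOn_const ht₀)

lemma wh_four {W : ℝ → ℝ} (hW : Continuous W)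
    (h1 : ∫ t in (0 : ℝ)..1, W t = 0)
    (hcos : ∫ t in (0 : ℝ)..1, W t * Real.cos (2 * Real.pi * t) = 0)
    (hsin : ∫ t in (0 : ℝ)..1, W t * Real.sin (2 * Real.pi * t) = 0)
    (hne : ∃ t ∈ Icc (0 : ℝ) 1, W t ≠ 0) :
    ∃ x y z w, 0 ≤ x ∧ x < y ∧ y < z ∧ z < w ∧ w ≤ 1 ∧
      ((0 < W x ∧ W y < 0 ∧ 0 < W z ∧ W w < 0) ∨ (W x < 0 ∧ 0 < W y ∧ W z < 0 ∧ 0 < W w)) := by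
  obtain ⟨x, y, z, hx, hxy, hyz, hz, p1, p2, p3⟩ := wh_pattern hW h1 hcos hsin hne
  obtain ⟨x', y', z', hx', hxy', hyz', hz', p1', p2', p3'⟩ :=
    wh_pattern (W := fun t => - W t) hW.neg (by simp [h1]) (by simp [hcos]) (by simp [hsin])
      (by simpa using hne)
  simp only [Left.neg_pos_iff, Left.neg_neg_iff] at p1' p2' p3'
  rcases lt_trichotomy x x' with h | h | h
  · exact ⟨x, x', y', z', hx, h, hxy', hyz', hz', Or.inl ⟨p1, p1', p2', p3'⟩⟩
  · subst h; linarith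
  · exact ⟨x', x, y, z, hx', h, hxy, hyz, hz, Or.inr ⟨p1', p1, p2, p3⟩⟩

/-! ### The curve -/

/-- The support function of the arc `c` on `[0,1]`. -/
noncomputable def whM {E : Type*} [NormedAddCommGroup E] [InnerProductSpace ℝ E] (c : ℝ → E)
    (v : E) : ℝ :=
  sSup ((fun t : ℝ => inner ℝ (c t) v) '' Icc (0 : ℝ) 1)

section curve
variable {E : Type*} [NormedAddCommGroup E] [InnerProductSpace ℝ E] {c : ℝ → E}

lemma whM_cont (hc : Continuous c) : Continuous (whM c) := by
  apply IsCompact.continuous_sSup (f := fun v t => inner ℝ (c t) v) isCompact_Icc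
  change Continuous fun p : E × ℝ => inner ℝ (c p.2) p.1
  fun_prop

lemma whM_le (hc : Continuous c) (v : E) {t : ℝ} (ht : t ∈ Icc (0 : ℝ) 1) :
    inner ℝ (c t) v ≤ whM c v := by
  have hcont : Continuous fun t : ℝ => inner ℝ (c t) v := by fun_prop
  exact le_csSup (isCompact_Icc.image hcont).bddAbove ⟨t, ht, rfl⟩

lemma whM_attained (hc : Continuous c) (v : E) :
    ∃ t ∈ Icc (0 : ℝ) 1, inner ℝ (c t) v = whM c v := by
  have hcont : Continuous fun t : ℝ => inner ℝ (c t) v := by fun_prop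
  obtain ⟨t, ht, h⟩ := (isCompact_Icc.image hcont).sSup_mem
    ((nonempty_Icc.mpr (zero_le_one' ℝ)).image _)
  exact ⟨t, ht, h⟩

/-- weights concentrated near the maxima of the height function -/
noncomputable def whw (c : ℝ → E) (ε : ℝ) (v : E) (t : ℝ) : ℝ :=
  max 0 (inner ℝ (c t) v - whM c v + ε)

lemma whw_cont (hc : Continuous c) (ε : ℝ) :
    Continuous fun p : E × ℝ => whw c ε p.1 p.2 := by
  have := whM_cont hc
  unfold whw
  fun_prop

lemma whw_nonneg (ε : ℝ) (v : E) (t : ℝ) : 0 ≤ whw c ε v t := le_max_left _ _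

lemma whw_pos {ε : ℝ} {v : E} {t : ℝ} (h : 0 < whw c ε v t) :
    whM c v - ε ≤ inner ℝ (c t) v := by
  unfold whw at h
  rcases lt_max_iff.mp h with h | h
  · exact absurd h (lt_irrefl _)
  · linarith

lemma whw_exists_pos (hc : Continuous c) {ε : ℝ} (hε : 0 < ε) (v : E) :
    ∃ t ∈ Icc (0 : ℝ) 1, 0 < whw c ε v t := by
  obtain ⟨t, ht, h⟩ := whM_attained hc v
  exact ⟨t, ht, lt_max_of_lt_right (by rw [h]; linarith)⟩

/-- total weight -/
noncomputable def whA (c : ℝ → E) (ε : ℝ) (v : E) : ℝ := ∫ t in (0 : ℝ)..1, whw c ε v t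

lemma whA_cont (hc : Continuous c) (ε : ℝ) : Continuous (whA c ε) :=
  intervalIntegral.continuous_parametric_intervalIntegral_of_continuous' (whw_cont hc ε) 0 1

lemma whA_pos (hc : Continuous c) {ε : ℝ} (hε : 0 < ε) (v : E) : 0 < whA c ε v :=
  intervalIntegral.integral_pos (zero_lt_one' ℝ)
    ((whw_cont hc ε).comp (by fun_prop : Continuous fun t : ℝ => (v, t))).continuousOn
    (fun t _ => whw_nonneg ε v t) (whw_exists_pos hc hε v)

/-- difference of normalized weights -/
noncomputable def whW (c : ℝ → E) (ε : ℝ) (v : E) (t : ℝ) : ℝ :=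
  whw c ε v t / whA c ε v - whw c ε (-v) t / whA c ε (-v)

lemma whW_neg (ε : ℝ) (v : E) (t : ℝ) : whW c ε (-v) t = - whW c ε v t := by
  simp [whW]

lemma whW_cont (hc : Continuous c) {ε : ℝ} (hε : 0 < ε) :
    Continuous fun p : E × ℝ => whW c ε p.1 p.2 := by
  unfold whW
  have h1 := whw_cont hc ε
  have h2 := whA_cont hc ε
  refine Continuous.sub (h1.div (h2.comp continuous_fst) fun p => (whA_pos hc hε _).ne') ?_
  exact (h1.comp (by fun_prop : Continuous fun p : E × ℝ => (-p.1, p.2))).div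
    (h2.comp (by fun_prop : Continuous fun p : E × ℝ => -p.1)) fun p => (whA_pos hc hε _).ne'

lemma whW_pos (hc : Continuous c) {ε : ℝ} (hε : 0 < ε) {v : E} {t : ℝ} (h : 0 < whW c ε v t) :
    whM c v - ε ≤ inner ℝ (c t) v := by
  apply whw_pos
  have h1 : 0 ≤ whw c ε (-v) t / whA c ε (-v) :=
    div_nonneg (whw_nonneg _ _ _) (whA_pos hc hε _).le
  unfold whW at h
  have h2 : 0 < whw c ε v t / whA c ε v := by linarith
  exact (div_pos_iff_of_pos_right (whA_pos hc hε _)).mp h2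

lemma whW_integral (hc : Continuous c) {ε : ℝ} (hε : 0 < ε) (v : E) :
    ∫ t in (0 : ℝ)..1, whW c ε v t = 0 := by
  have hcw : ∀ v, Continuous (whw c ε v) := fun v =>
    (whw_cont hc ε).comp (by fun_prop : Continuous fun t : ℝ => (v, t))
  unfold whW
  rw [intervalIntegral.integral_sub, intervalIntegral.integral_div, intervalIntegral.integral_div]
  · change whA c ε v / whA c ε v - whA c ε (-v) / whA c ε (-v) = 0
    rw [div_self (whA_pos hc hε _).ne', div_self (whA_pos hc hε _).ne', sub_self]
  · exact ((hcw v).div_const _).intervalIntegrable _ _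
  · exact ((hcw (-v)).div_const _).intervalIntegrable _ _

lemma wh_approx (hc : Continuous c) (a b e : E)
    (ha : ‖a‖ = 1) (hb : ‖b‖ = 1) (he : ‖e‖ = 1)
    (hab : inner ℝ a b = 0) (hae : inner ℝ a e = 0) (hbe : inner ℝ b e = 0)
    {ε : ℝ} (hε : 0 < ε) :
    ∃ (v : E) (x y z w : ℝ), ‖v‖ = 1 ∧ 0 ≤ x ∧ x ≤ y ∧ y ≤ z ∧ z ≤ w ∧ w ≤ 1 ∧
      whM c v - ε ≤ inner ℝ (c x) v ∧ whM c (-v) - ε ≤ inner ℝ (c y) (-v) ∧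
      whM c v - ε ≤ inner ℝ (c z) v ∧ whM c (-v) - ε ≤ inner ℝ (c w) (-v) := by
  have hWc := whW_cont hc hε
  have hc1 : Continuous fun v : E => ∫ t in (0 : ℝ)..1, whW c ε v t * Real.cos (2 * Real.pi * t) :=
    intervalIntegral.continuous_parametric_intervalIntegral_of_continuous'
      (f := fun v t => whW c ε v t * Real.cos (2 * Real.pi * t))
      (hWc.mul (by fun_prop : Continuous fun p : E × ℝ => Real.cos (2 * Real.pi * p.2))) 0 1
  have hc2 : Continuous fun v : E => ∫ t in (0 : ℝ)..1, whW c ε v t * Real.sin (2 * Real.pi * t) :=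
    intervalIntegral.continuous_parametric_intervalIntegral_of_continuous'
      (f := fun v t => whW c ε v t * Real.sin (2 * Real.pi * t))
      (hWc.mul (by fun_prop : Continuous fun p : E × ℝ => Real.sin (2 * Real.pi * p.2))) 0 1
  obtain ⟨v, hv, hFv⟩ := wh_borsuk a b e ha hb he hab hae hbe
    (fun v => ((∫ t in (0 : ℝ)..1, whW c ε v t * Real.cos (2 * Real.pi * t) : ℝ) : ℂ) +
      ((∫ t in (0 : ℝ)..1, whW c ε v t * Real.sin (2 * Real.pi * t) : ℝ) : ℂ) * Complex.I)
    (by fun_prop)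
    (fun v => by
      simp only [whW_neg, neg_mul, intervalIntegral.integral_neg, Complex.ofReal_neg]
      ring)
  have hre := congrArg Complex.re hFv
  have him := congrArg Complex.im hFv
  simp only [Complex.add_re, Complex.add_im, Complex.mul_re, Complex.mul_im, Complex.ofReal_re,
    Complex.ofReal_im, Complex.I_re, Complex.I_im, Complex.zero_re, Complex.zero_im, mul_zero,
    mul_one, sub_zero, add_zero, zero_add] at hre him
  have hneg : ∀ t, whW c ε v t < 0 → whM c (-v) - ε ≤ inner ℝ (c t) (-v) := fun t ht =>
    whW_pos hc hε (by rw [whW_neg]; linarith)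
  by_cases hne : ∃ t ∈ Icc (0 : ℝ) 1, whW c ε v t ≠ 0
  · obtain ⟨x, y, z, w, hx, hxy, hyz, hzw, hw, H⟩ := wh_four
      (hWc.comp (by fun_prop : Continuous fun t : ℝ => (v, t))) (whW_integral hc hε v) hre him hne
    simp only [Function.comp_apply] at H
    rcases H with ⟨p1, p2, p3, p4⟩ | ⟨p1, p2, p3, p4⟩
    · exact ⟨v, x, y, z, w, hv, hx, hxy.le, hyz.le, hzw.le, hw, whW_pos hc hε p1, hneg _ p2,
        whW_pos hc hε p3, hneg _ p4⟩
    · refine ⟨-v, x, y, z, w, by simpa using hv, hx, hxy.le, hyz.le, hzw.le, hw, hneg _ p1, ?_,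
        hneg _ p3, ?_⟩
      · rw [neg_neg]; exact whW_pos hc hε p2
      · rw [neg_neg]; exact whW_pos hc hε p4
  · push Not at hne
    obtain ⟨t, ht, hpos⟩ := whw_exists_pos hc hε v
    have h0 := hne t ht
    unfold whW at h0
    have h1 : 0 < whw c ε v t / whA c ε v := div_pos hpos (whA_pos hc hε _)
    have h2 : 0 < whw c ε (-v) t / whA c ε (-v) := by linarith
    have h3 := (div_pos_iff_of_pos_right (whA_pos hc hε _)).mp h2
    exact ⟨v, t, t, t, t, hv, ht.1, le_rfl, le_rfl, le_rfl, ht.2, whw_pos hpos, whw_pos h3,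
      whw_pos hpos, whw_pos h3⟩

lemma wh_limit [ProperSpace E] (hc : Continuous c) (a b e : E)
    (ha : ‖a‖ = 1) (hb : ‖b‖ = 1) (he : ‖e‖ = 1)
    (hab : inner ℝ a b = 0) (hae : inner ℝ a e = 0) (hbe : inner ℝ b e = 0) :
    ∃ (v : E) (x y z w : ℝ), ‖v‖ = 1 ∧ 0 ≤ x ∧ x ≤ y ∧ y ≤ z ∧ z ≤ w ∧ w ≤ 1 ∧
      whM c v ≤ inner ℝ (c x) v ∧ whM c (-v) ≤ inner ℝ (c y) (-v) ∧
      whM c v ≤ inner ℝ (c z) v ∧ whM c (-v) ≤ inner ℝ (c w) (-v) := by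
  have hM := whM_cont hc
  set S : Set (E × ℝ × ℝ × ℝ × ℝ) :=
    (Metric.sphere (0 : E) 1 ×ˢ Icc (0 : ℝ) 1 ×ˢ Icc (0 : ℝ) 1 ×ˢ Icc (0 : ℝ) 1 ×ˢ Icc (0 : ℝ) 1) ∩
      {p | p.2.1 ≤ p.2.2.1 ∧ p.2.2.1 ≤ p.2.2.2.1 ∧ p.2.2.2.1 ≤ p.2.2.2.2} with hS
  have hScomp : IsCompact S := by
    apply IsCompact.inter_right
    · exact (isCompact_sphere _ _).prod (isCompact_Icc.prod (isCompact_Icc.prod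
        (isCompact_Icc.prod isCompact_Icc)))
    · have i1 : IsClosed {p : E × ℝ × ℝ × ℝ × ℝ | p.2.1 ≤ p.2.2.1} :=
        isClosed_le (by fun_prop) (by fun_prop)
      have i2 : IsClosed {p : E × ℝ × ℝ × ℝ × ℝ | p.2.2.1 ≤ p.2.2.2.1} :=
        isClosed_le (by fun_prop) (by fun_prop)
      have i3 : IsClosed {p : E × ℝ × ℝ × ℝ × ℝ | p.2.2.2.1 ≤ p.2.2.2.2} :=
        isClosed_le (by fun_prop) (by fun_prop)
      exact i1.inter (i2.inter i3)
  set Φ : E × ℝ × ℝ × ℝ × ℝ → ℝ := fun p =>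
    max (max (whM c p.1 - inner ℝ (c p.2.1) p.1) (whM c (-p.1) - inner ℝ (c p.2.2.1) (-p.1)))
      (max (whM c p.1 - inner ℝ (c p.2.2.2.1) p.1) (whM c (-p.1) - inner ℝ (c p.2.2.2.2) (-p.1)))
    with hΦ
  have hΦc : Continuous Φ := by rw [hΦ]; fun_prop
  have key : ∀ ε > 0, ∃ p ∈ S, Φ p ≤ ε := by
    intro ε hε
    obtain ⟨v, x, y, z, w, hv, hx, hxy, hyz, hzw, hw, p1, p2, p3, p4⟩ :=
      wh_approx hc a b e ha hb he hab hae hbe hε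
    refine ⟨(v, x, y, z, w), ⟨⟨by simpa using hv, ⟨?_, ?_⟩, ⟨?_, ?_⟩, ⟨?_, ?_⟩, ⟨?_, ?_⟩⟩,
      hxy, hyz, hzw⟩, ?_⟩
    iterate 8 (dsimp only; linarith)
    simp only [hΦ, max_le_iff]
    refine ⟨⟨?_, ?_⟩, ?_, ?_⟩ <;> linarith
  obtain ⟨p₁, hp₁, -⟩ := key 1 one_pos
  obtain ⟨p, hp, hmin⟩ := hScomp.exists_isMinOn ⟨p₁, hp₁⟩ hΦc.continuousOn
  have hle : Φ p ≤ 0 := by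
    apply le_of_forall_pos_le_add
    intro ε hε
    obtain ⟨p', hp', h'⟩ := key ε hε
    have := hmin hp'
    simp only [mem_ofPred_eq] at this
    linarith
  obtain ⟨v, x, y, z, w⟩ := p
  obtain ⟨⟨hv, hx, hy, hz, hw⟩, hxy, hyz, hzw⟩ := hp
  simp only [hΦ, max_le_iff] at hle
  obtain ⟨⟨q1, q2⟩, q3, q4⟩ := hle
  refine ⟨v, x, y, z, w, by simpa using hv, hx.1, hxy, hyz, hzw, hw.2, ?_, ?_, ?_, ?_⟩ <;> linarith

lemma wh_final [ProperSpace E] (hc : Continuous c) (h01 : c 1 = c 0) (a b e : E)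
    (ha : ‖a‖ = 1) (hb : ‖b‖ = 1) (he : ‖e‖ = 1)
    (hab : inner ℝ a b = 0) (hae : inner ℝ a e = 0) (hbe : inner ℝ b e = 0) :
    ∃ (v : E) (x y z w : ℝ), ‖v‖ = 1 ∧ 0 ≤ x ∧ x < y ∧ y < z ∧ z < w ∧ w < 1 ∧
      whM c v = inner ℝ (c x) v ∧ whM c (-v) = inner ℝ (c y) (-v) ∧
      whM c v = inner ℝ (c z) v ∧ whM c (-v) = inner ℝ (c w) (-v) := by
  obtain ⟨v, x, y, z, w, hv, hx, hxy, hyz, hzw, hw, p1, p2, p3, p4⟩ :=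
    wh_limit hc a b e ha hb he hab hae hbe
  have q1 := le_antisymm p1 (whM_le hc v ⟨by linarith, by linarith⟩)
  have q2 := le_antisymm p2 (whM_le hc (-v) ⟨by linarith, by linarith⟩)
  have q3 := le_antisymm p3 (whM_le hc v ⟨by linarith, by linarith⟩)
  have q4 := le_antisymm p4 (whM_le hc (-v) ⟨by linarith, by linarith⟩)
  by_cases hdeg : whM c v = - whM c (-v)
  · have hall : ∀ t ∈ Icc (0 : ℝ) 1, whM c v = inner ℝ (c t) v ∧
        whM c (-v) = inner ℝ (c t) (-v) := by
      intro t ht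
      have h1 := whM_le hc v ht
      have h2 := whM_le hc (-v) ht
      rw [inner_neg_right] at h2 ⊢
      constructor <;> linarith
    refine ⟨v, 0, 1 / 4, 1 / 2, 3 / 4, hv, le_rfl, by norm_num, by norm_num, by norm_num,
      by norm_num, (hall _ ?_).1, (hall _ ?_).2, (hall _ ?_).1, (hall _ ?_).2⟩ <;>
      constructor <;> norm_num
  · have hne : ∀ s t, whM c v = inner ℝ (c s) v → whM c (-v) = inner ℝ (c t) (-v) →
        c s ≠ c t := by
      intro s t hs ht hst
      rw [inner_neg_right, ← hst] at ht
      exact hdeg (by linarith)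
    have r1 : x < y := lt_of_le_of_ne hxy fun h => hne x y q1 q2 (by rw [h])
    have r2 : y < z := lt_of_le_of_ne hyz fun h => hne z y q3 q2 (by rw [h])
    have r3 : z < w := lt_of_le_of_ne hzw fun h => hne z w q3 q4 (by rw [h])
    rcases lt_or_eq_of_le hw with hw | hw
    · exact ⟨v, x, y, z, w, hv, hx, r1, r2, r3, hw, q1, q2, q3, q4⟩
    · have r0 : 0 < x := lt_of_le_of_ne hx fun h => hne x w q1 q4 (by rw [← h, hw, h01])
      refine ⟨-v, 0, x, y, z, by simpa using hv, le_rfl, r0, r1, r2, by linarith, ?_, ?_, q2, ?_⟩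
      · rw [← h01, ← hw]; exact q4
      · rw [neg_neg]; exact q1
      · rw [neg_neg]; exact q3

end curve

open scoped RealInnerProductSpace in
/-- Wienholtz: every continuous closed curve in `ℝᵈ`, `d ≥ 3`, admits a
pair of parallel interleaved bitangent support hyperplanes: there are a unit vector `v`
and parameters `t₁ < t₂ < t₃ < t₄` in `[0,1)` such that the height `⟨γ ·, v⟩` attains its
maximum at `t₁` and `t₃` and its minimum at `t₂` and `t₄`. -/
theorem wienholtz_interleaved_support (d : ℕ) (hd : 3 ≤ d)
    (γ : AddCircle (1 : ℝ) → EuclideanSpace ℝ (Fin d)) (hγ : Continuous γ) :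
    ∃ (v : EuclideanSpace ℝ (Fin d)) (t₁ t₂ t₃ t₄ : ℝ), ‖v‖ = 1 ∧
      0 ≤ t₁ ∧ t₁ < t₂ ∧ t₂ < t₃ ∧ t₃ < t₄ ∧ t₄ < 1 ∧
      (∀ s : AddCircle (1 : ℝ), ⟪γ s, v⟫ ≤ ⟪γ (t₁ : ℝ), v⟫) ∧
      ⟪γ (t₃ : ℝ), v⟫ = ⟪γ (t₁ : ℝ), v⟫ ∧
      (∀ s : AddCircle (1 : ℝ), ⟪γ (t₂ : ℝ), v⟫ ≤ ⟪γ s, v⟫) ∧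
      ⟪γ (t₄ : ℝ), v⟫ = ⟪γ (t₂ : ℝ), v⟫ := by
  have hc : Continuous fun t : ℝ => γ (t : AddCircle (1 : ℝ)) :=
    hγ.comp (AddCircle.continuous_mk' 1)
  have h01 : γ ((1 : ℝ) : AddCircle (1 : ℝ)) = γ ((0 : ℝ) : AddCircle (1 : ℝ)) := by
    rw [AddCircle.coe_period]; rfl
  have hn : ∀ i : Fin d, ‖(EuclideanSpace.single i (1 : ℝ) : EuclideanSpace ℝ (Fin d))‖ = 1 := by
    intro i; simp
  have ho : ∀ i j : Fin d, i ≠ j →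
      inner ℝ (EuclideanSpace.single i (1 : ℝ) : EuclideanSpace ℝ (Fin d))
        (EuclideanSpace.single j (1 : ℝ)) = 0 := by
    intro i j hij
    rw [EuclideanSpace.inner_single_left]
    simp [hij]
  obtain ⟨v, x, y, z, w, hv, hx, hxy, hyz, hzw, hw, q1, q2, q3, q4⟩ :=
    wh_final hc h01 _ _ _ (hn ⟨0, by omega⟩) (hn ⟨1, by omega⟩) (hn ⟨2, by omega⟩)
      (ho _ _ (by simp)) (ho _ _ (by simp)) (ho _ _ (by simp))
  have hrep : ∀ s : AddCircle (1 : ℝ), ∃ t ∈ Icc (0 : ℝ) 1, (t : AddCircle (1 : ℝ)) = s := by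
    intro s
    have : Fact ((0 : ℝ) < 1) := ⟨one_pos⟩
    obtain ⟨t, ht, rfl⟩ := AddCircle.eq_coe_Ico s
    exact ⟨t, ⟨ht.1, ht.2.le⟩, rfl⟩
  refine ⟨v, x, y, z, w, hv, hx, hxy, hyz, hzw, hw, ?_, ?_, ?_, ?_⟩
  · intro s
    obtain ⟨t, ht, rfl⟩ := hrep s
    rw [← q1]
    exact whM_le hc v ht
  · rw [← q1, ← q3]
  · intro s
    obtain ⟨t, ht, rfl⟩ := hrep s
    have := whM_le hc (-v) ht
    rw [q2, inner_neg_right, inner_neg_right] at this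
    linarith
  · have := q2.symm.trans q4
    rw [inner_neg_right, inner_neg_right] at this
    linarith
end
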